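/- arXiv:2404.00258 — 4 statements merged into one kernel-verified Lean document; each statement's English description precedes it below -/
import Mathlib

section
/- Assume f satisfies (f1) and (f2) with constant B ∈ [1,∞), and let ψ, φ, ε₁, ε₂ be the Emden–Fowler model data. Define I(ρ) := f(φ(ρ))·F(φ(ρ)) · ( ψ'(ρ)² / ( g(ψ(ρ))²·G(ψ(ρ))² ) ) · ( f'(φ(ρ))·F(φ(ρ)) − g'(ψ(ρ))·G(ψ(ρ)) ). Then there exist C > 0 and ρ₀ > 1 such that for all ρ ≥ ρ₀: | √B · ∫_ρ^∞ (ρτ)^{1/4} · sin( (2/√B)·(ρ^{1/2} − τ^{1/2}) ) · I(τ) dτ | ≤ C · f(φ(ρ))·F(φ(ρ)) · sup_{τ ≥ ρ} ( ε₁(τ) + ε₂(τ) ). -/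
open MeasureTheory Filter

/-- `Fint f s = ∫_s^∞ dτ / f(τ)`. -/
noncomputable def Fint (f : ℝ → ℝ) (s : ℝ) : ℝ := ∫ τ in Set.Ioi s, 1 / f τ

/-- `1/B₁[f](s) = (−log F(s))·(1 − f'(s)·F(s))`, with `G` playing the role of `F`. -/
noncomputable def invB1 (f G : ℝ → ℝ) (s : ℝ) : ℝ :=
  (-Real.log (G s)) * (1 - deriv f s * G s)

/-- `1/B₂[f](s) = f'(s)·F(s)·(log F(s))²·(f(s)·f''(s)·F(s)/f'(s) − 1)`,
with `G` playing the role of `F`. -/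
noncomputable def invB2 (f G : ℝ → ℝ) (s : ℝ) : ℝ :=
  deriv f s * G s * (Real.log (G s)) ^ 2 *
    (f s * deriv (deriv f) s * G s / deriv f s - 1)

/-- The model singular solution `v`. -/
noncomputable def modelv (B t : ℝ) : ℝ :=
  if B = 1 then Real.log (-2 * Real.log t) else (-2 * Real.log t) ^ ((B - 1) / B)

/-- The model nonlinearity `g`. -/
noncomputable def modelg (B s : ℝ) : ℝ :=
  if B = 1 then 4 * Real.exp (Real.exp s - 2 * s)
  else (4 / (B * (B / (B - 1)))) * s ^ (1 - 2 * (B / (B - 1))) * Real.exp (s ^ (B / (B - 1)))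

/-- The model function `G(s) = ∫_s^∞ dτ/g(τ)` in closed form. -/
noncomputable def modelG (B s : ℝ) : ℝ :=
  if B = 1 then (1 / 4) * (Real.exp s + 1) * Real.exp (-Real.exp s)
  else (B / 4) * (s ^ (B / (B - 1)) + 1) * Real.exp (-(s ^ (B / (B - 1))))

/-- The Emden–Fowler model profile `ψ`. -/
noncomputable def modelpsi (B ρ : ℝ) : ℝ :=
  if B = 1 then Real.log (ρ - 1) else (ρ - 1) ^ ((B - 1) / B)

/-- `ε₁(ρ) = |1/B₁[f](φ(ρ)) − 1/B₁[g](ψ(ρ))|`. -/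
noncomputable def eps1 (f φ : ℝ → ℝ) (B ρ : ℝ) : ℝ :=
  |invB1 f (Fint f) (φ ρ) - invB1 (modelg B) (modelG B) (modelpsi B ρ)|

/-- `ε₂(ρ) = |1/B₂[f](φ(ρ)) − 1/B₂[g](ψ(ρ))|`. -/
noncomputable def eps2 (f φ : ℝ → ℝ) (B ρ : ℝ) : ℝ :=
  |invB2 f (Fint f) (φ ρ) - invB2 (modelg B) (modelG B) (modelpsi B ρ)|

/-- The inhomogeneous term
`I(ρ) = f(φ)F(φ) · ψ'² / (g(ψ)²G(ψ)²) · (f'(φ)F(φ) − g'(ψ)G(ψ))`. -/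
noncomputable def Ifun (f φ : ℝ → ℝ) (B ρ : ℝ) : ℝ :=
  f (φ ρ) * Fint f (φ ρ) *
    ((deriv (modelpsi B) ρ) ^ 2 / ((modelg B (modelpsi B ρ)) ^ 2 * (modelG B (modelpsi B ρ)) ^ 2)) *
    (deriv f (φ ρ) * Fint f (φ ρ) - deriv (modelg B) (modelpsi B ρ) * modelG B (modelpsi B ρ))

/-!
Both `F(φ(ρ))` and `G(ψ(ρ))` equal `exp (-L)` with `L(ρ) = ρ - log ρ + const`. Along a profile,
`q = f'(φ)F(φ)` therefore satisfies `L (1 - q) = 1/B₁` and `q' = (1/B₂) (1 - 1/ρ) / L²` exactly,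
and so does its model counterpart. Subtracting, the difference `D` of the two `q`s is bounded by
`ε₁ / L` and its derivative by `ε₂ / L²`. Bounds on `1/B₂` integrate to `0 ≤ 1/B₁ ≤ K`, so
`q ≤ 1`: the amplitude `f(φ)F(φ)` is nonincreasing, with logarithmic derivative `O(1/ρ)`. The
inhomogeneous term is thus `O(1/τ)` with derivative `O(1/τ²)`, and one integration by parts
against the oscillating kernel leaves an integrand of order `τ ^ (-5/4)`.
-/

namespace EmdenFowler

open scoped Topology

section Calculus

theorem le_of_tendsto_of_hasDerivAt_nonneg {u u' : ℝ → ℝ} {a l : ℝ}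
    (hu : ∀ x ≥ a, HasDerivAt u (u' x) x) (hu' : ∀ x ≥ a, 0 ≤ u' x)
    (hl : Tendsto u atTop (𝓝 l)) : u a ≤ l := by
  have hmono : MonotoneOn u (Set.Ici a) :=
    monotoneOn_of_hasDerivWithinAt_nonneg (convex_Ici a)
      (fun x hx => (hu x hx).continuousAt.continuousWithinAt)
      (fun x hx => (hu x (interior_subset hx)).hasDerivWithinAt)
      (fun x hx => hu' x (interior_subset hx))
  exact ge_of_tendsto hl
    ((eventually_ge_atTop a).mono fun x hx => hmono Set.self_mem_Ici hx hx)

theorem mul_one_sub_mem_Icc_of_hasDerivAt {q β L L' : ℝ → ℝ} {a K : ℝ}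
    (hL : ∀ x ≥ a, HasDerivAt L (L' x) x) (hL' : ∀ x ≥ a, 0 ≤ L' x)
    (hLpos : ∀ x ≥ a, 0 < L x) (hLtop : Tendsto L atTop atTop)
    (hq : ∀ x ≥ a, HasDerivAt q (β x * L' x / L x ^ 2) x)
    (hβ : ∀ x ≥ a, β x ∈ Set.Icc 0 K) (hq1 : Tendsto q atTop (𝓝 1)) :
    L a * (1 - q a) ∈ Set.Icc 0 K := by
  have hle : q a ≤ 1 := le_of_tendsto_of_hasDerivAt_nonneg hq
    (fun x hx => div_nonneg (mul_nonneg (hβ x hx).1 (hL' x hx)) (sq_nonneg _)) hq1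
  have hge : -(q a + K * (L a)⁻¹) ≤ -1 := by
    refine le_of_tendsto_of_hasDerivAt_nonneg (u := fun x => -(q x + K * (L x)⁻¹))
      (u' := fun x => (K - β x) * L' x / L x ^ 2) (fun x hx => ?_)
      (fun x hx => div_nonneg (mul_nonneg (sub_nonneg.2 (hβ x hx).2) (hL' x hx)) (sq_nonneg _)) ?_
    · refine ((hq x hx).add (((hL x hx).inv (hLpos x hx).ne').const_mul K)).neg.congr_deriv ?_
      ring
    · simpa using (hq1.add (hLtop.inv_tendsto_atTop.const_mul K)).neg
  have hLa : 0 < L a := hLpos a le_rfl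
  refine ⟨mul_nonneg hLa.le (sub_nonneg.2 hle), ?_⟩
  calc L a * (1 - q a) ≤ L a * (K * (L a)⁻¹) := by gcongr; linarith
    _ = K := by field_simp

theorem hasDerivAt_of_comp_eventuallyEq {F φ h : ℝ → ℝ} {F' h' x : ℝ} {s : Set ℝ}
    (hF : HasStrictDerivAt F F' (φ x)) (hF' : F' ≠ 0) (hs : s ∈ 𝓝 (φ x)) (hinj : s.InjOn F)
    (hφ : ∀ᶠ y in 𝓝 x, φ y ∈ s ∧ F (φ y) = h y) (hh : HasDerivAt h h' x) :
    HasDerivAt φ (F'⁻¹ * h') x := by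
  have hleft : Set.LeftInvOn (Function.invFunOn F s) F s := hinj.leftInvOn_invFunOn
  have hinv := (hF.to_local_left_inverse hF' (Filter.mem_of_superset hs hleft)).hasDerivAt
  rw [hφ.self_of_nhds.2] at hinv
  refine (hinv.comp x hh).congr_of_eventuallyEq ?_
  filter_upwards [hφ] with y hy
  rw [Function.comp_apply, ← hy.2, hleft hy.1]

theorem tendsto_intervalIntegral_mul_deriv {u u' v v' : ℝ → ℝ} {a M : ℝ}
    (hu : ∀ x ≥ a, HasDerivAt u (u' x) x) (hv : ∀ x ≥ a, HasDerivAt v (v' x) x)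
    (hu' : IntegrableOn u' (Set.Ioi a)) (hv' : ContinuousOn v' (Set.Ici a))
    (hu0 : Tendsto u atTop (𝓝 0)) (hvM : ∀ x ≥ a, |v x| ≤ M) :
    Tendsto (fun R => ∫ x in a..R, u x * v' x) atTop
      (𝓝 (-(u a * v a) - ∫ x in Set.Ioi a, u' x * v x)) := by
  have hvc : ContinuousOn v (Set.Ioi a) := fun x hx =>
    (hv x (le_of_lt hx)).continuousAt.continuousWithinAt
  have hint : IntegrableOn (fun x => u' x * v x) (Set.Ioi a) :=
    hu'.mul_bdd (c := M) (hvc.aestronglyMeasurable measurableSet_Ioi)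
      ((ae_restrict_mem measurableSet_Ioi).mono fun x hx => hvM x (le_of_lt hx))
  have hboundary : Tendsto (fun R => u R * v R) atTop (𝓝 0) :=
    hu0.zero_mul_isBoundedUnder_le
      (isBoundedUnder_of_eventually_le ((eventually_ge_atTop a).mono hvM))
  have hlim := (hboundary.sub_const (u a * v a)).sub
    (intervalIntegral_tendsto_integral_Ioi a hint tendsto_id)
  rw [zero_sub] at hlim
  refine hlim.congr' ?_
  filter_upwards [eventually_ge_atTop a] with R hR
  have hIcc : Set.uIcc a R ⊆ Set.Ici a := by
    rw [Set.uIcc_of_le hR]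
    exact Set.Icc_subset_Ici_self
  refine (intervalIntegral.integral_mul_deriv_eq_deriv_mul (fun x hx => hu x (hIcc hx))
    (fun x hx => hv x (hIcc hx)) ?_ (hv'.mono hIcc).intervalIntegrable).symm
  exact (intervalIntegrable_iff_integrableOn_Ioc_of_le hR).2
    (hu'.mono_set Set.Ioc_subset_Ioi_self)

theorem exists_tendsto_intervalIntegral_mul_deriv {u u' v v' : ℝ → ℝ} {a M : ℝ}
    (hu : ∀ x ≥ a, HasDerivAt u (u' x) x) (hv : ∀ x ≥ a, HasDerivAt v (v' x) x)
    (hu' : IntegrableOn u' (Set.Ioi a)) (hv' : ContinuousOn v' (Set.Ici a))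
    (hu0 : Tendsto u atTop (𝓝 0)) (hvM : ∀ x ≥ a, |v x| ≤ M) :
    ∃ J, Tendsto (fun R => ∫ x in a..R, u x * v' x) atTop (𝓝 J) ∧
      |J| ≤ (|u a| + ∫ x in Set.Ioi a, |u' x|) * M := by
  refine ⟨_, tendsto_intervalIntegral_mul_deriv hu hv hu' hv' hu0 hvM, ?_⟩
  have hintegral : |∫ x in Set.Ioi a, u' x * v x| ≤ ∫ x in Set.Ioi a, |u' x| * M := by
    rw [← Real.norm_eq_abs]
    refine norm_integral_le_of_norm_le (hu'.abs.mul_const M) ?_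
    filter_upwards [ae_restrict_mem measurableSet_Ioi] with x hx
    rw [Real.norm_eq_abs, abs_mul]
    exact mul_le_mul_of_nonneg_left (hvM x (le_of_lt hx)) (abs_nonneg _)
  calc |-(u a * v a) - ∫ x in Set.Ioi a, u' x * v x|
      ≤ |u a| * |v a| + |∫ x in Set.Ioi a, u' x * v x| := by
        rw [← abs_mul, ← abs_neg (u a * v a)]
        exact abs_sub _ _
    _ ≤ |u a| * M + ∫ x in Set.Ioi a, |u' x| * M := by
        gcongr
        exact hvM a le_rfl
    _ = (|u a| + ∫ x in Set.Ioi a, |u' x|) * M := by rw [integral_mul_const, add_mul]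

theorem abs_setIntegral_Ioi_le_of_tendsto {f : ℝ → ℝ} {a J : ℝ}
    (h : Tendsto (fun R => ∫ x in a..R, f x) atTop (𝓝 J)) :
    |∫ x in Set.Ioi a, f x| ≤ |J| := by
  by_cases hf : IntegrableOn f (Set.Ioi a)
  · rw [tendsto_nhds_unique h (intervalIntegral_tendsto_integral_Ioi a hf tendsto_id)]
  · rw [integral_undef hf, abs_zero]
    exact abs_nonneg J

end Calculus

section Oscillation

/-- Up to the factor `√B`, the Duhamel kernel that solves the linearized Emden–Fowler equation
for the perturbation of the model profile. -/
noncomputable def kernel (B ρ τ : ℝ) : ℝ :=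
  (ρ * τ) ^ ((1 : ℝ) / 4)
    * Real.sin ((2 / Real.sqrt B) * (ρ ^ ((1 : ℝ) / 2) - τ ^ ((1 : ℝ) / 2)))

/-- An antiderivative of `τ ^ (-3/4) * kernel B ρ τ` in `τ`. -/
noncomputable def kernelPrimitive (B ρ τ : ℝ) : ℝ :=
  Real.sqrt B * ρ ^ ((1 : ℝ) / 4)
    * Real.cos ((2 / Real.sqrt B) * (ρ ^ ((1 : ℝ) / 2) - τ ^ ((1 : ℝ) / 2)))

theorem abs_kernelPrimitive_le {B ρ : ℝ} (hρ : 0 ≤ ρ) (τ : ℝ) :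
    |kernelPrimitive B ρ τ| ≤ Real.sqrt B * ρ ^ ((1 : ℝ) / 4) := by
  have hamp : 0 ≤ Real.sqrt B * ρ ^ ((1 : ℝ) / 4) := by positivity
  rw [kernelPrimitive, abs_mul, abs_of_nonneg hamp]
  exact mul_le_of_le_one_right hamp (Real.abs_cos_le_one _)

theorem hasDerivAt_kernelPrimitive {B ρ τ : ℝ} (hB : 0 < B) (hρ : 0 ≤ ρ) (hτ : 0 < τ) :
    HasDerivAt (kernelPrimitive B ρ) (τ ^ (-(3 : ℝ) / 4) * kernel B ρ τ) τ := by
  refine ((((Real.hasDerivAt_rpow_const (p := (1 : ℝ) / 2) (Or.inl hτ.ne')).const_sub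
    (ρ ^ ((1 : ℝ) / 2))).const_mul (2 / Real.sqrt B)).cos.const_mul
    (Real.sqrt B * ρ ^ ((1 : ℝ) / 4))).congr_deriv ?_
  have hpow : τ ^ ((1 : ℝ) / 2 - 1) = τ ^ (-(3 : ℝ) / 4) * τ ^ ((1 : ℝ) / 4) := by
    rw [← Real.rpow_add hτ]; norm_num
  have hsqrt : Real.sqrt B ≠ 0 := (Real.sqrt_pos.2 hB).ne'
  rw [kernel, Real.mul_rpow hρ hτ.le, hpow]
  field_simp

theorem continuousOn_kernel (B ρ : ℝ) : ContinuousOn (kernel B ρ) (Set.Ioi 0) := by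
  unfold kernel
  fun_prop (disch := norm_num)

theorem abs_rpow_mul_le {X A τ : ℝ} (hτ : 0 < τ) (hX : |X| ≤ A / τ) :
    |τ ^ ((3 : ℝ) / 4) * X| ≤ A * τ ^ (-(1 : ℝ) / 4) := by
  have hsplit : τ ^ (-(1 : ℝ) / 4) = τ ^ ((3 : ℝ) / 4) / τ := by
    rw [← Real.rpow_sub_one hτ.ne']; norm_num
  rw [abs_mul, abs_of_nonneg (Real.rpow_nonneg hτ.le _), hsplit]
  calc τ ^ ((3 : ℝ) / 4) * |X| ≤ τ ^ ((3 : ℝ) / 4) * (A / τ) := by gcongr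
    _ = A * (τ ^ ((3 : ℝ) / 4) / τ) := by ring

theorem abs_deriv_rpow_mul_le {X : ℝ → ℝ} {A A' τ : ℝ} (hτ : 0 < τ)
    (hX : DifferentiableAt ℝ X τ) (hA : |X τ| ≤ A / τ) (hA' : |deriv X τ| ≤ A' / τ ^ 2) :
    |deriv (fun x => x ^ ((3 : ℝ) / 4) * X x) τ| ≤ (3 / 4 * A + A') * τ ^ (-(5 : ℝ) / 4) := by
  have hderiv := ((Real.hasDerivAt_rpow_const (p := (3 : ℝ) / 4) (Or.inl hτ.ne')).mul
    hX.hasDerivAt).deriv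
  have hlow : τ ^ ((3 : ℝ) / 4 - 1) = τ ^ (-(5 : ℝ) / 4) * τ := by
    rw [← Real.rpow_add_one hτ.ne']; norm_num
  have hhigh : τ ^ ((3 : ℝ) / 4) = τ ^ (-(5 : ℝ) / 4) * τ ^ 2 := by
    rw [← Real.rpow_add_natCast hτ.ne']; norm_num
  have hy : 0 < τ ^ (-(5 : ℝ) / 4) := Real.rpow_pos_of_pos hτ _
  change |deriv ((fun x : ℝ => x ^ ((3 : ℝ) / 4)) * X) τ| ≤ _
  rw [hderiv, hlow, hhigh]
  set y := τ ^ (-(5 : ℝ) / 4)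
  calc |3 / 4 * (y * τ) * X τ + y * τ ^ 2 * deriv X τ|
      ≤ 3 / 4 * (y * τ) * |X τ| + y * τ ^ 2 * |deriv X τ| := by
        refine (abs_add_le _ _).trans_eq ?_
        rw [abs_mul, abs_mul (y * τ ^ 2), abs_of_pos (show 0 < 3 / 4 * (y * τ) by positivity),
          abs_of_pos (show 0 < y * τ ^ 2 by positivity)]
    _ ≤ 3 / 4 * (y * τ) * (A / τ) + y * τ ^ 2 * (A' / τ ^ 2) := by gcongr
    _ = (3 / 4 * A + A') * y := by field_simp

theorem integrableOn_deriv_of_abs_le_rpow {u : ℝ → ℝ} {A ρ p : ℝ} (hρ : 0 < ρ) (hp : p < -1)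
    (hu : ∀ τ > ρ, |deriv u τ| ≤ A * τ ^ p) : IntegrableOn (deriv u) (Set.Ioi ρ) :=
  ((integrableOn_Ioi_rpow_of_lt hp hρ).const_mul A).mono' (aestronglyMeasurable_deriv u _)
    ((ae_restrict_mem measurableSet_Ioi).mono hu)

theorem setIntegral_abs_le_of_rpow {u : ℝ → ℝ} {A ρ : ℝ} (hρ : 0 < ρ)
    (hu : ∀ τ > ρ, |u τ| ≤ A * τ ^ (-(5 : ℝ) / 4)) :
    ∫ τ in Set.Ioi ρ, |u τ| ≤ 4 * A * ρ ^ (-(1 : ℝ) / 4) := by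
  have hint : IntegrableOn (fun τ : ℝ => A * τ ^ (-(5 : ℝ) / 4)) (Set.Ioi ρ) :=
    (integrableOn_Ioi_rpow_of_lt (by norm_num) hρ).const_mul A
  calc ∫ τ in Set.Ioi ρ, |u τ| ≤ ∫ τ in Set.Ioi ρ, A * τ ^ (-(5 : ℝ) / 4) :=
        integral_mono_of_nonneg (ae_of_all _ fun τ => abs_nonneg _) hint
          ((ae_restrict_mem measurableSet_Ioi).mono hu)
    _ = 4 * A * ρ ^ (-(1 : ℝ) / 4) := by
        rw [integral_const_mul, integral_Ioi_rpow_of_lt (by norm_num) hρ]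
        norm_num
        ring

theorem tendsto_zero_of_abs_le_rpow {u : ℝ → ℝ} {A ρ p : ℝ} (hp : p < 0)
    (hu : ∀ τ ≥ ρ, |u τ| ≤ A * τ ^ p) : Tendsto u atTop (𝓝 0) := by
  have hdecay : Tendsto (fun τ : ℝ => A * τ ^ p) atTop (𝓝 0) := by
    simpa using (tendsto_rpow_neg_atTop (neg_pos.2 hp)).const_mul A
  exact squeeze_zero_norm' ((eventually_ge_atTop ρ).mono hu) hdecay

theorem exists_tendsto_integral_kernel_mul {X : ℝ → ℝ} {A A' B ρ : ℝ} (hB : 0 < B) (hρ : 0 < ρ)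
    (hX : ∀ τ ≥ ρ, DifferentiableAt ℝ X τ) (hA : ∀ τ ≥ ρ, |X τ| ≤ A / τ)
    (hA' : ∀ τ ≥ ρ, |deriv X τ| ≤ A' / τ ^ 2) :
    ∃ J, Tendsto (fun R => ∫ τ in ρ..R, kernel B ρ τ * X τ) atTop (𝓝 J) ∧
      |Real.sqrt B * J| ≤ 4 * B * (A + A') := by
  set u : ℝ → ℝ := fun τ => τ ^ ((3 : ℝ) / 4) * X τ
  have hpos : ∀ τ ≥ ρ, 0 < τ := fun τ hτ => hρ.trans_le hτ
  have hu : ∀ τ ≥ ρ, HasDerivAt u (deriv u τ) τ := fun τ hτ =>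
    ((Real.differentiableAt_rpow_const_of_ne _ (hpos τ hτ).ne').mul (hX τ hτ)).hasDerivAt
  have hubound : ∀ τ ≥ ρ, |u τ| ≤ A * τ ^ (-(1 : ℝ) / 4) := fun τ hτ =>
    abs_rpow_mul_le (hpos τ hτ) (hA τ hτ)
  have hu'bound : ∀ τ > ρ, |deriv u τ| ≤ (3 / 4 * A + A') * τ ^ (-(5 : ℝ) / 4) := fun τ hτ =>
    abs_deriv_rpow_mul_le (hpos τ hτ.le) (hX τ hτ.le) (hA τ hτ.le) (hA' τ hτ.le)
  have hu' : IntegrableOn (deriv u) (Set.Ioi ρ) :=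
    integrableOn_deriv_of_abs_le_rpow hρ (by norm_num) hu'bound
  have hcont : ContinuousOn (fun τ => τ ^ (-(3 : ℝ) / 4) * kernel B ρ τ) (Set.Ici ρ) :=
    (continuousOn_id.rpow_const fun τ hτ => Or.inl (hpos τ hτ).ne').mul
      ((continuousOn_kernel B ρ).mono hpos)
  obtain ⟨J, hJ, hJle⟩ := exists_tendsto_intervalIntegral_mul_deriv hu
    (fun τ hτ => hasDerivAt_kernelPrimitive hB hρ.le (hpos τ hτ)) hu' hcont
    (tendsto_zero_of_abs_le_rpow (by norm_num) hubound)
    (fun τ _ => abs_kernelPrimitive_le hρ.le τ)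
  refine ⟨J, hJ.congr' ?_, ?_⟩
  · filter_upwards [eventually_ge_atTop ρ] with R hR
    refine intervalIntegral.integral_congr fun τ hτ => ?_
    rw [Set.uIcc_of_le hR] at hτ
    have hcancel : τ ^ ((3 : ℝ) / 4) * τ ^ (-(3 : ℝ) / 4) = 1 := by
      rw [← Real.rpow_add (hpos τ hτ.1)]; norm_num
    linear_combination (X τ * kernel B ρ τ) * hcancel
  · have hJbound : |J| ≤ 4 * (A + A') * ρ ^ (-(1 : ℝ) / 4)
        * (Real.sqrt B * ρ ^ ((1 : ℝ) / 4)) := by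
      refine hJle.trans (mul_le_mul_of_nonneg_right ?_ (by positivity))
      linarith [hubound ρ le_rfl, setIntegral_abs_le_of_rpow hρ hu'bound]
    have hcancel : ρ ^ (-(1 : ℝ) / 4) * ρ ^ ((1 : ℝ) / 4) = 1 := by
      rw [← Real.rpow_add hρ]; norm_num
    rw [abs_mul, abs_of_nonneg (Real.sqrt_nonneg B)]
    refine (mul_le_mul_of_nonneg_left hJbound (Real.sqrt_nonneg B)).trans_eq ?_
    linear_combination (4 * (A + A') * Real.sqrt B * Real.sqrt B) * hcancel
      + 4 * (A + A') * Real.mul_self_sqrt hB.le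

end Oscillation

section Profile

/-- The common value `F(φ(ρ)) = G(ψ(ρ))` prescribed by the Emden–Fowler change of variables. -/
noncomputable def profileLevel (B ρ : ℝ) : ℝ := (B / 4) * ρ * Real.exp (-ρ + 1)

/-- `-log F(φ(ρ)) = -log G(ψ(ρ))`, which is asymptotic to `ρ`. -/
noncomputable def logLevel (B ρ : ℝ) : ℝ := -Real.log (profileLevel B ρ)

/-- The quantity `f'(φ)F(φ)` of (f2) along a profile `φ`. -/
noncomputable def profileSlope (f F φ : ℝ → ℝ) (ρ : ℝ) : ℝ := deriv f (φ ρ) * F (φ ρ)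

/-- The amplitude `f(φ)F(φ)` of the inhomogeneous term along a profile `φ`. -/
noncomputable def profileAmplitude (f F φ : ℝ → ℝ) (ρ : ℝ) : ℝ := f (φ ρ) * F (φ ρ)

/-- `φ` solves `F(φ(ρ)) = profileLevel B ρ` to first order at `ρ`, where `F' = -1/f` and `f` is
twice differentiable. Both `(f, F, φ)` and the model `(g, G, ψ)` are of this form. -/
structure IsProfileAt (f F φ : ℝ → ℝ) (B ρ : ℝ) : Prop where
  apply_eq : F (φ ρ) = profileLevel B ρ
  ne_zero : f (φ ρ) ≠ 0
  differentiableAt : DifferentiableAt ℝ f (φ ρ)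
  differentiableAt_deriv : DifferentiableAt ℝ (deriv f) (φ ρ)
  hasDerivAt_tail : HasDerivAt F (-1 / f (φ ρ)) (φ ρ)
  hasDerivAt_profile : HasDerivAt φ (profileAmplitude f F φ ρ * (1 - 1 / ρ)) ρ

/-- `φ` is a profile of `(f, F)` for all large `ρ`, and along it (f2) holds with the limit of
`1/B₂[f]` relaxed to the bounds `0` and `K`. -/
structure IsProfile (f F φ : ℝ → ℝ) (B K : ℝ) : Prop where
  eventually_isProfileAt : ∀ᶠ ρ in atTop, IsProfileAt f F φ B ρ
  tendsto_slope : Tendsto (profileSlope f F φ) atTop (𝓝 1)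
  eventually_invB2_mem : ∀ᶠ ρ in atTop, invB2 f F (φ ρ) ∈ Set.Icc 0 K

variable {f F φ g G ψ : ℝ → ℝ} {B K ρ : ℝ}

theorem hasDerivAt_profileLevel (hρ : ρ ≠ 0) :
    HasDerivAt (profileLevel B) (-(profileLevel B ρ * (1 - 1 / ρ))) ρ := by
  refine (((hasDerivAt_id ρ).const_mul (B / 4)).mul
    ((hasDerivAt_id ρ).neg.add_const 1).exp).congr_deriv ?_
  simp only [profileLevel, id, Pi.neg_apply]
  field_simp
  ring

theorem profileLevel_pos (hB : 0 < B) (hρ : 0 < ρ) : 0 < profileLevel B ρ := by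
  unfold profileLevel
  positivity

theorem tendsto_profileLevel (B : ℝ) : Tendsto (profileLevel B) atTop (𝓝 0) := by
  have h := (Real.tendsto_pow_mul_exp_neg_atTop_nhds_zero 1).const_mul (B / 4 * Real.exp 1)
  rw [mul_zero] at h
  refine h.congr fun ρ => ?_
  rw [profileLevel, Real.exp_add]
  ring

theorem hasDerivAt_logLevel (hB : 0 < B) (hρ : 0 < ρ) :
    HasDerivAt (logLevel B) (1 - 1 / ρ) ρ := by
  have hne : profileLevel B ρ ≠ 0 := (profileLevel_pos hB hρ).ne'
  refine ((hasDerivAt_profileLevel hρ.ne').log hne).neg.congr_deriv ?_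
  field_simp

theorem tendsto_logLevel_div (hB : 0 < B) :
    Tendsto (fun ρ => logLevel B ρ / ρ) atTop (𝓝 1) := by
  have hconst : Tendsto (fun ρ : ℝ => (Real.log (B / 4) + 1) / ρ) atTop (𝓝 0) :=
    tendsto_const_nhds.div_atTop tendsto_id
  have hlim := (hconst.add Real.isLittleO_log_id_atTop.tendsto_div_nhds_zero).const_sub 1
  rw [add_zero, sub_zero] at hlim
  refine hlim.congr' ?_
  filter_upwards [eventually_gt_atTop 0] with ρ hρ
  rw [logLevel, profileLevel, Real.log_mul (by positivity) (Real.exp_pos _).ne',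
    Real.log_mul (by positivity) hρ.ne', Real.log_exp, id]
  field_simp
  ring

theorem eventually_half_le_logLevel (hB : 0 < B) : ∀ᶠ ρ in atTop, ρ / 2 ≤ logLevel B ρ := by
  filter_upwards [(tendsto_logLevel_div hB).eventually_const_le one_half_lt_one,
    eventually_gt_atTop 0] with ρ h hρ
  rw [le_div_iff₀ hρ] at h
  linarith

theorem tendsto_logLevel (hB : 0 < B) : Tendsto (logLevel B) atTop atTop :=
  tendsto_atTop_mono' atTop (eventually_half_le_logLevel hB)
    (tendsto_id.atTop_div_const (by norm_num))

namespace IsProfileAt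

theorem log_apply (h : IsProfileAt f F φ B ρ) : Real.log (F (φ ρ)) = -logLevel B ρ := by
  rw [h.apply_eq, logLevel, neg_neg]

theorem invB1_eq (h : IsProfileAt f F φ B ρ) :
    invB1 f F (φ ρ) = logLevel B ρ * (1 - profileSlope f F φ ρ) := by
  rw [invB1, h.log_apply, neg_neg, profileSlope]

theorem hasDerivAt_profileAmplitude (h : IsProfileAt f F φ B ρ) :
    HasDerivAt (profileAmplitude f F φ)
      (profileAmplitude f F φ ρ * (1 - 1 / ρ) * (profileSlope f F φ ρ - 1)) ρ := by
  refine ((h.differentiableAt.hasDerivAt.comp ρ h.hasDerivAt_profile).mul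
    (h.hasDerivAt_tail.comp ρ h.hasDerivAt_profile)).congr_deriv ?_
  have hne := h.ne_zero
  simp only [profileSlope, profileAmplitude, Function.comp_apply]
  field_simp
  ring

theorem hasDerivAt_profileSlope (h : IsProfileAt f F φ B ρ) (hslope : profileSlope f F φ ρ ≠ 0)
    (hlog : logLevel B ρ ≠ 0) :
    HasDerivAt (profileSlope f F φ)
      (invB2 f F (φ ρ) * (1 - 1 / ρ) / logLevel B ρ ^ 2) ρ := by
  refine ((h.differentiableAt_deriv.hasDerivAt.comp ρ h.hasDerivAt_profile).mul
    (h.hasDerivAt_tail.comp ρ h.hasDerivAt_profile)).congr_deriv ?_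
  have hne := h.ne_zero
  have hderiv : deriv f (φ ρ) ≠ 0 := left_ne_zero_of_mul hslope
  simp only [invB2, h.log_apply, profileAmplitude, Function.comp_apply]
  field_simp
  ring

theorem abs_slope_sub_eq (hf : IsProfileAt f F φ B ρ) (hg : IsProfileAt g G ψ B ρ)
    (hlog : 0 < logLevel B ρ) :
    |profileSlope f F φ ρ - profileSlope g G ψ ρ|
      = |invB1 f F (φ ρ) - invB1 g G (ψ ρ)| / logLevel B ρ := by
  rw [hf.invB1_eq, hg.invB1_eq, ← mul_sub, abs_mul, abs_of_pos hlog,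
    mul_div_cancel_left₀ _ hlog.ne', abs_sub_comm]
  congr 1
  ring

end IsProfileAt

namespace IsProfile

theorem eventually_hasDerivAt_slope (h : IsProfile f F φ B K) (hB : 0 < B) :
    ∀ᶠ ρ in atTop, HasDerivAt (profileSlope f F φ)
      (invB2 f F (φ ρ) * (1 - 1 / ρ) / logLevel B ρ ^ 2) ρ := by
  filter_upwards [h.eventually_isProfileAt, h.tendsto_slope.eventually_ne one_ne_zero,
    (tendsto_logLevel hB).eventually_ne_atTop 0] with ρ hρ hslope hlog
  exact hρ.hasDerivAt_profileSlope hslope hlog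

theorem eventually_invB1_mem (h : IsProfile f F φ B K) (hB : 0 < B) :
    ∀ᶠ ρ in atTop, invB1 f F (φ ρ) ∈ Set.Icc 0 K := by
  obtain ⟨ρ₁, hρ₁⟩ := eventually_atTop.1 (h.eventually_isProfileAt.and
    ((h.eventually_hasDerivAt_slope hB).and (h.eventually_invB2_mem.and
      (((tendsto_logLevel hB).eventually_gt_atTop 0).and (eventually_ge_atTop 1)))))
  filter_upwards [eventually_ge_atTop ρ₁] with ρ hρ
  rw [(hρ₁ ρ hρ).1.invB1_eq]
  have hafter : ∀ τ ≥ ρ, ρ₁ ≤ τ := fun τ hτ => le_trans hρ hτ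
  refine mul_one_sub_mem_Icc_of_hasDerivAt (L' := fun τ => 1 - 1 / τ)
    (β := fun τ => invB2 f F (φ τ)) (fun τ hτ => ?_) (fun τ hτ => ?_)
    (fun τ hτ => (hρ₁ τ (hafter τ hτ)).2.2.2.1) (tendsto_logLevel hB)
    (fun τ hτ => (hρ₁ τ (hafter τ hτ)).2.1) (fun τ hτ => (hρ₁ τ (hafter τ hτ)).2.2.1)
    h.tendsto_slope
  · exact hasDerivAt_logLevel hB (one_pos.trans_le (hρ₁ τ (hafter τ hτ)).2.2.2.2)
  · exact sub_nonneg.2 (div_le_one_of_le₀ (hρ₁ τ (hafter τ hτ)).2.2.2.2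
      (zero_le_one.trans (hρ₁ τ (hafter τ hτ)).2.2.2.2))

theorem eventually_one_sub_slope_mem (h : IsProfile f F φ B K) (hB : 0 < B) :
    ∀ᶠ ρ in atTop, 1 - profileSlope f F φ ρ ∈ Set.Icc 0 (2 * K / ρ) := by
  filter_upwards [h.eventually_isProfileAt, h.eventually_invB1_mem hB,
    eventually_half_le_logLevel hB, eventually_gt_atTop 0] with ρ hρ hmem hlog hpos
  rw [hρ.invB1_eq] at hmem
  have hslope : 0 ≤ 1 - profileSlope f F φ ρ :=
    nonneg_of_mul_nonneg_right hmem.1 ((half_pos hpos).trans_le hlog)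
  refine ⟨hslope, (le_div_iff₀ hpos).2 ?_⟩
  linarith [mul_le_mul_of_nonneg_right hlog hslope, hmem.2]

end IsProfile

end Profile

section Comparison

/-- `ε₁ + ε₂` for two profiles `φ` of `(f, F)` and `ψ` of `(g, G)`. -/
noncomputable def profileGap (f F φ g G ψ : ℝ → ℝ) (ρ : ℝ) : ℝ :=
  |invB1 f F (φ ρ) - invB1 g G (ψ ρ)| + |invB2 f F (φ ρ) - invB2 g G (ψ ρ)|

/-- The factor of the inhomogeneous term that does not compare the two profiles: the quotient
`ψ' / (g(ψ)G(ψ))` in the paper's formula equals `1 - 1/ρ`. -/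
noncomputable def profileWeight (f F φ : ℝ → ℝ) (ρ : ℝ) : ℝ :=
  profileAmplitude f F φ ρ * (1 - 1 / ρ) ^ 2

/-- The difference `f'(φ)F(φ) - g'(ψ)G(ψ)` in the inhomogeneous term. -/
noncomputable def slopeGap (f F φ g G ψ : ℝ → ℝ) (ρ : ℝ) : ℝ :=
  profileSlope f F φ ρ - profileSlope g G ψ ρ

variable {f F φ g G ψ : ℝ → ℝ} {B K K' ρ : ℝ}

theorem abs_one_sub_one_div_le_one (hρ : 1 ≤ ρ) : |1 - 1 / ρ| ≤ 1 := by
  have hpos : 0 < ρ := one_pos.trans_le hρ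
  exact abs_le.2 ⟨by linarith [(div_le_one hpos).2 hρ], by linarith [one_div_pos.2 hpos]⟩

theorem abs_profileWeight_le (hρ : 1 ≤ ρ) :
    |profileWeight f F φ ρ| ≤ |profileAmplitude f F φ ρ| := by
  rw [profileWeight, abs_mul, abs_pow]
  exact mul_le_of_le_one_right (abs_nonneg _)
    (pow_le_one₀ (abs_nonneg _) (abs_one_sub_one_div_le_one hρ))

namespace IsProfileAt

theorem hasDerivAt_profileWeight (h : IsProfileAt f F φ B ρ) (hρ : ρ ≠ 0) :
    HasDerivAt (profileWeight f F φ) (profileAmplitude f F φ ρ * (1 - 1 / ρ) *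
      (2 / ρ ^ 2 - (1 - 1 / ρ) ^ 2 * (1 - profileSlope f F φ ρ))) ρ := by
  have hinv : HasDerivAt (fun x : ℝ => 1 - 1 / x) (1 / ρ ^ 2) ρ := by
    simpa using (hasDerivAt_inv hρ).const_sub 1
  refine (h.hasDerivAt_profileAmplitude.mul (hinv.pow 2)).congr_deriv ?_
  norm_num
  ring

theorem abs_deriv_profileWeight_le (h : IsProfileAt f F φ B ρ) (hρ : 1 ≤ ρ)
    (hslope : 1 - profileSlope f F φ ρ ∈ Set.Icc 0 (2 * K / ρ))
    (hamp : 0 ≤ profileAmplitude f F φ ρ) :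
    |deriv (profileWeight f F φ) ρ| ≤ (2 * K + 2) * profileAmplitude f F φ ρ / ρ := by
  have hpos : 0 < ρ := one_pos.trans_le hρ
  have hθ : |1 - 1 / ρ| ≤ 1 := abs_one_sub_one_div_le_one hρ
  have hsq : 2 / ρ ^ 2 ≤ 2 / ρ := by
    gcongr
    exact le_self_pow₀ hρ two_ne_zero
  have hbracket : |2 / ρ ^ 2 - (1 - 1 / ρ) ^ 2 * (1 - profileSlope f F φ ρ)|
      ≤ 2 / ρ + 2 * K / ρ := by
    refine (abs_sub _ _).trans (add_le_add ?_ ?_)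
    · rwa [abs_of_pos (by positivity)]
    · rw [abs_mul, abs_pow, abs_of_nonneg hslope.1]
      exact (mul_le_of_le_one_left hslope.1 (pow_le_one₀ (abs_nonneg _) hθ)).trans hslope.2
  rw [(h.hasDerivAt_profileWeight hpos.ne').deriv, abs_mul, abs_mul, abs_of_nonneg hamp]
  calc profileAmplitude f F φ ρ * |1 - 1 / ρ|
        * |2 / ρ ^ 2 - (1 - 1 / ρ) ^ 2 * (1 - profileSlope f F φ ρ)|
      ≤ profileAmplitude f F φ ρ * 1 * (2 / ρ + 2 * K / ρ) := by gcongr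
    _ = (2 * K + 2) * profileAmplitude f F φ ρ / ρ := by ring

end IsProfileAt

namespace IsProfile

theorem eventually_antitoneOn_profileAmplitude (h : IsProfile f F φ B K) (hB : 0 < B)
    (hamp : ∀ᶠ ρ in atTop, 0 ≤ profileAmplitude f F φ ρ) :
    ∀ᶠ ρ in atTop, AntitoneOn (profileAmplitude f F φ) (Set.Ici ρ) := by
  have hall := h.eventually_isProfileAt.and ((h.eventually_one_sub_slope_mem hB).and
    (hamp.and (eventually_ge_atTop 1)))
  filter_upwards [eventually_forall_ge_atTop.2 hall] with ρ hρ
  refine antitoneOn_of_hasDerivWithinAt_nonpos (convex_Ici ρ)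
    (fun τ hτ => (hρ τ hτ).1.hasDerivAt_profileAmplitude.continuousAt.continuousWithinAt)
    (fun τ hτ => (hρ τ (interior_subset hτ)).1.hasDerivAt_profileAmplitude.hasDerivWithinAt)
    (fun τ hτ => ?_)
  obtain ⟨-, hslope, hE, hτ1⟩ := hρ τ (interior_subset hτ)
  have hθ : 0 ≤ 1 - 1 / τ := sub_nonneg.2 ((div_le_one (one_pos.trans_le hτ1)).2 hτ1)
  exact mul_nonpos_of_nonneg_of_nonpos (mul_nonneg hE hθ) (by linarith [hslope.1])

theorem eventually_profileWeight_bounds (h : IsProfile f F φ B K) (hB : 0 < B)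
    (hamp : ∀ᶠ ρ in atTop, 0 ≤ profileAmplitude f F φ ρ) :
    ∀ᶠ ρ in atTop, ∀ τ ≥ ρ, DifferentiableAt ℝ (profileWeight f F φ) τ ∧
      |profileWeight f F φ τ| ≤ profileAmplitude f F φ ρ ∧
      |deriv (profileWeight f F φ) τ| ≤ (2 * K + 2) * profileAmplitude f F φ ρ / τ := by
  have hall := h.eventually_isProfileAt.and ((h.eventually_one_sub_slope_mem hB).and
    (hamp.and (h.eventually_invB2_mem.and (eventually_ge_atTop 1))))
  filter_upwards [h.eventually_antitoneOn_profileAmplitude hB hamp,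
    eventually_forall_ge_atTop.2 hall] with ρ hanti hρ τ hτ
  obtain ⟨hprofile, hslope, hE, hinvB2, hτ1⟩ := hρ τ hτ
  have hle : profileAmplitude f F φ τ ≤ profileAmplitude f F φ ρ :=
    hanti Set.self_mem_Ici hτ hτ
  have hK : 0 ≤ K := hinvB2.1.trans hinvB2.2
  have hpos : 0 < τ := one_pos.trans_le hτ1
  refine ⟨(hprofile.hasDerivAt_profileWeight hpos.ne').differentiableAt,
    (abs_profileWeight_le hτ1).trans (by rwa [abs_of_nonneg hE]),
    (hprofile.abs_deriv_profileWeight_le hτ1 hslope hE).trans ?_⟩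
  gcongr

theorem eventually_slopeGap_bounds (hf : IsProfile f F φ B K) (hg : IsProfile g G ψ B K')
    (hB : 0 < B) :
    ∀ᶠ ρ in atTop, DifferentiableAt ℝ (slopeGap f F φ g G ψ) ρ ∧
      |slopeGap f F φ g G ψ ρ| ≤ 2 * profileGap f F φ g G ψ ρ / ρ ∧
      |deriv (slopeGap f F φ g G ψ) ρ| ≤ 4 * profileGap f F φ g G ψ ρ / ρ ^ 2 := by
  filter_upwards [hf.eventually_isProfileAt, hg.eventually_isProfileAt,
    hf.eventually_hasDerivAt_slope hB, hg.eventually_hasDerivAt_slope hB,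
    eventually_half_le_logLevel hB, eventually_ge_atTop 1] with ρ hfρ hgρ hf' hg' hlog hρ
  have hpos : 0 < ρ := one_pos.trans_le hρ
  have hhalf : 0 < ρ / 2 := half_pos hpos
  have hlogpos : 0 < logLevel B ρ := hhalf.trans_le hlog
  have hθ : |1 - 1 / ρ| ≤ 1 := abs_one_sub_one_div_le_one hρ
  have hderiv := hf'.sub hg'
  refine ⟨hderiv.differentiableAt, ?_, ?_⟩
  · rw [slopeGap, hfρ.abs_slope_sub_eq hgρ hlogpos]
    calc |invB1 f F (φ ρ) - invB1 g G (ψ ρ)| / logLevel B ρ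
        ≤ profileGap f F φ g G ψ ρ / (ρ / 2) :=
          div_le_div₀ (by unfold profileGap; positivity)
            (le_add_of_nonneg_right (abs_nonneg _)) hhalf hlog
      _ = 2 * profileGap f F φ g G ψ ρ / ρ := by field_simp
  · rw [show deriv (slopeGap f F φ g G ψ) ρ = _ from hderiv.deriv, ← sub_div, ← sub_mul, abs_div,
      abs_mul, abs_of_pos (pow_pos hlogpos 2)]
    calc |invB2 f F (φ ρ) - invB2 g G (ψ ρ)| * |1 - 1 / ρ| / logLevel B ρ ^ 2
        ≤ profileGap f F φ g G ψ ρ * 1 / (ρ / 2) ^ 2 := by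
          have hle : |invB2 f F (φ ρ) - invB2 g G (ψ ρ)| ≤ profileGap f F φ g G ψ ρ :=
            le_add_of_nonneg_left (abs_nonneg _)
          have hgap : 0 ≤ profileGap f F φ g G ψ ρ := (abs_nonneg _).trans hle
          gcongr
      _ = 4 * profileGap f F φ g G ψ ρ / ρ ^ 2 := by field_simp; norm_num

theorem eventually_bddAbove_profileGap (hf : IsProfile f F φ B K) (hg : IsProfile g G ψ B K')
    (hB : 0 < B) : ∀ᶠ ρ in atTop, BddAbove (profileGap f F φ g G ψ '' Set.Ici ρ) := by
  have hle : ∀ᶠ ρ in atTop, profileGap f F φ g G ψ ρ ≤ 2 * max K K' := by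
    filter_upwards [hf.eventually_invB1_mem hB, hg.eventually_invB1_mem hB,
      hf.eventually_invB2_mem, hg.eventually_invB2_mem] with ρ hf₁ hg₁ hf₂ hg₂
    have hsub {x y : ℝ} (hx : x ∈ Set.Icc 0 K) (hy : y ∈ Set.Icc 0 K') : |x - y| ≤ max K K' :=
      abs_sub_le_of_nonneg_of_le hx.1 (le_max_of_le_left hx.2) hy.1 (le_max_of_le_right hy.2)
    rw [profileGap, two_mul]
    exact add_le_add (hsub hf₁ hg₁) (hsub hf₂ hg₂)
  filter_upwards [eventually_forall_ge_atTop.2 hle] with ρ hρ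
  exact ⟨_, Set.forall_mem_image.2 hρ⟩

end IsProfile

theorem abs_deriv_mul_le {Y D : ℝ → ℝ} {N N' A A' τ : ℝ}
    (hY : DifferentiableAt ℝ Y τ) (hD : DifferentiableAt ℝ D τ) (hYN : |Y τ| ≤ N)
    (hYN' : |deriv Y τ| ≤ N' / τ) (hDA : |D τ| ≤ A / τ) (hDA' : |deriv D τ| ≤ A' / τ ^ 2) :
    |deriv (fun x => Y x * D x) τ| ≤ (N' * A + N * A') / τ ^ 2 := by
  rw [deriv_fun_mul hY hD]
  calc |deriv Y τ * D τ + Y τ * deriv D τ|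
      ≤ |deriv Y τ| * |D τ| + |Y τ| * |deriv D τ| := by
        rw [← abs_mul, ← abs_mul]
        exact abs_add_le _ _
    _ ≤ N' / τ * (A / τ) + N * (A' / τ ^ 2) :=
        add_le_add
          (mul_le_mul hYN' hDA (abs_nonneg _) ((abs_nonneg _).trans hYN'))
          (mul_le_mul hYN hDA' (abs_nonneg _) ((abs_nonneg _).trans hYN))
    _ = (N' * A + N * A') / τ ^ 2 := by ring

theorem IsProfile.exists_tendsto_integral_kernel_mul_slopeGap (hf : IsProfile f F φ B K)
    (hg : IsProfile g G ψ B K') (hB : 0 < B)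
    (hamp : ∀ᶠ ρ in atTop, 0 ≤ profileAmplitude f F φ ρ) :
    ∃ C > 0, ∀ᶠ ρ in atTop, ∃ J,
      Tendsto (fun R => ∫ τ in ρ..R,
        kernel B ρ τ * (profileWeight f F φ τ * slopeGap f F φ g G ψ τ)) atTop (𝓝 J) ∧
      |Real.sqrt B * J|
        ≤ C * profileAmplitude f F φ ρ * sSup (profileGap f F φ g G ψ '' Set.Ici ρ) := by
  obtain ⟨ρ₁, hρ₁⟩ := hf.eventually_invB2_mem.exists
  have hK : 0 ≤ K := hρ₁.1.trans hρ₁.2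
  refine ⟨8 * B * (2 * K + 5), by positivity, ?_⟩
  filter_upwards [hf.eventually_profileWeight_bounds hB hamp,
    eventually_forall_ge_atTop.2 (hf.eventually_slopeGap_bounds hg hB),
    hf.eventually_bddAbove_profileGap hg hB, eventually_gt_atTop 0]
    with ρ hweight hslope hbdd hρ
  set E := profileAmplitude f F φ ρ
  set S := sSup (profileGap f F φ g G ψ '' Set.Ici ρ)
  have hpos : ∀ τ ≥ ρ, 0 < τ := fun τ hτ => hρ.trans_le hτ
  have hS : ∀ τ ≥ ρ, profileGap f F φ g G ψ τ ≤ S := fun τ hτ =>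
    le_csSup hbdd (Set.mem_image_of_mem _ hτ)
  have hA : ∀ τ ≥ ρ, |slopeGap f F φ g G ψ τ| ≤ 2 * S / τ := fun τ hτ => by
    have := hpos τ hτ
    refine (hslope τ hτ).2.1.trans ?_
    gcongr
    exact hS τ hτ
  have hA' : ∀ τ ≥ ρ, |deriv (slopeGap f F φ g G ψ) τ| ≤ 4 * S / τ ^ 2 := fun τ hτ => by
    refine (hslope τ hτ).2.2.trans ?_
    gcongr
    exact hS τ hτ
  obtain ⟨J, hJ, hJle⟩ := exists_tendsto_integral_kernel_mul
    (X := fun τ => profileWeight f F φ τ * slopeGap f F φ g G ψ τ) (A := E * (2 * S)) hB hρ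
    (fun τ hτ => (hweight τ hτ).1.mul (hslope τ hτ).1)
    (fun τ hτ => by
      rw [abs_mul, mul_div_assoc]
      exact mul_le_mul (hweight τ hτ).2.1 (hA τ hτ) (abs_nonneg _)
        ((abs_nonneg _).trans (hweight τ hτ).2.1))
    (fun τ hτ => abs_deriv_mul_le (hweight τ hτ).1 (hslope τ hτ).1
      (hweight τ hτ).2.1 (hweight τ hτ).2.2 (hA τ hτ) (hA' τ hτ))
  exact ⟨J, hJ, hJle.trans_eq (by ring)⟩

end Comparison

section TailIntegral

variable {f φ h : ℝ → ℝ} {s₀ s h' x : ℝ}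

theorem hasDerivAt_Fint (hf : ContinuousOn f (Set.Ioi s₀)) (hfpos : ∀ s, s₀ < s → 0 < f s)
    (hfint : ∀ s, s₀ < s → IntegrableOn (fun τ => 1 / f τ) (Set.Ioi s)) (hs : s₀ < s) :
    HasDerivAt (Fint f) (-1 / f s) s := by
  obtain ⟨a, ha, has⟩ := exists_between hs
  have hcont : ContinuousOn (fun τ => 1 / f τ) (Set.Ioi s₀) :=
    continuousOn_const.div hf fun x hx => (hfpos x hx).ne'
  have hinterval : HasDerivAt (fun x => ∫ τ in a..x, 1 / f τ) (1 / f s) s := by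
    refine intervalIntegral.integral_hasDerivAt_right
      ((hcont.mono fun x hx => ?_).intervalIntegrable)
      (hcont.stronglyMeasurableAtFilter isOpen_Ioi s hs) (hcont.continuousAt (Ioi_mem_nhds hs))
    rw [Set.uIcc_of_le has.le] at hx
    exact ha.trans_le hx.1
  rw [neg_div]
  refine (hinterval.const_sub (Fint f a)).congr_of_eventuallyEq ?_
  filter_upwards [Ioi_mem_nhds has] with x hx
  rw [← intervalIntegral.integral_Ioi_sub_Ioi (hfint a ha) (le_of_lt hx), Fint, Fint,
    sub_sub_cancel]

theorem Fint_pos (hfpos : ∀ s, s₀ < s → 0 < f s)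
    (hfint : ∀ s, s₀ < s → IntegrableOn (fun τ => 1 / f τ) (Set.Ioi s)) (hs : s₀ < s) :
    0 < Fint f s := by
  have hpos : ∀ τ ∈ Set.Ioi s, 0 < 1 / f τ := fun τ hτ => one_div_pos.2 (hfpos τ (hs.trans hτ))
  refine (setIntegral_pos_iff_support_of_nonneg_ae
    ((ae_restrict_mem measurableSet_Ioi).mono fun τ hτ => (hpos τ hτ).le) (hfint s hs)).2 ?_
  have hsupp : Set.Ioi s ⊆ Function.support fun τ => 1 / f τ := fun τ hτ => (hpos τ hτ).ne'
  rw [Set.inter_eq_right.2 hsupp, Real.volume_Ioi]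
  exact ENNReal.zero_lt_top

theorem strictAntiOn_Fint (hf : ContinuousOn f (Set.Ioi s₀)) (hfpos : ∀ s, s₀ < s → 0 < f s)
    (hfint : ∀ s, s₀ < s → IntegrableOn (fun τ => 1 / f τ) (Set.Ioi s)) :
    StrictAntiOn (Fint f) (Set.Ioi s₀) :=
  strictAntiOn_of_hasDerivWithinAt_neg (convex_Ioi s₀) (f' := fun s => -1 / f s)
    (fun _ hs => (hasDerivAt_Fint hf hfpos hfint hs).continuousAt.continuousWithinAt)
    (fun _ hs => (hasDerivAt_Fint hf hfpos hfint (interior_subset hs)).hasDerivWithinAt)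
    (fun s hs => div_neg_of_neg_of_pos neg_one_lt_zero (hfpos s (interior_subset hs)))

theorem hasDerivAt_of_Fint_comp_eventuallyEq (hf : ContinuousOn f (Set.Ioi s₀))
    (hfpos : ∀ s, s₀ < s → 0 < f s)
    (hfint : ∀ s, s₀ < s → IntegrableOn (fun τ => 1 / f τ) (Set.Ioi s))
    (hφ : ∀ᶠ y in 𝓝 x, s₀ < φ y ∧ Fint f (φ y) = h y) (hh : HasDerivAt h h' x) :
    HasDerivAt φ (-(f (φ x) * h')) x := by
  have hφx : s₀ < φ x := hφ.self_of_nhds.1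
  have hne : f (φ x) ≠ 0 := (hfpos _ hφx).ne'
  have hstrict : HasStrictDerivAt (Fint f) (-1 / f (φ x)) (φ x) :=
    hasStrictDerivAt_of_hasDerivAt_of_continuousAt (f' := fun s => -1 / f s)
      (eventually_of_mem (Ioi_mem_nhds hφx) fun s hs => hasDerivAt_Fint hf hfpos hfint hs)
      (continuousAt_const.div (hf.continuousAt (Ioi_mem_nhds hφx)) hne)
  refine (hasDerivAt_of_comp_eventuallyEq hstrict (div_ne_zero (by norm_num) hne)
    (Ioi_mem_nhds hφx) (strictAntiOn_Fint hf hfpos hfint).injOn hφ hh).congr_deriv ?_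
  field_simp

theorem tendsto_atTop_of_Fint_comp {l : Filter ℝ} (hf : ContinuousOn f (Set.Ioi s₀))
    (hfpos : ∀ s, s₀ < s → 0 < f s)
    (hfint : ∀ s, s₀ < s → IntegrableOn (fun τ => 1 / f τ) (Set.Ioi s))
    (hφ : ∀ᶠ y in l, s₀ < φ y) (hlim : Tendsto (fun y => Fint f (φ y)) l (𝓝 0)) :
    Tendsto φ l atTop := by
  refine tendsto_atTop.2 fun M => ?_
  have hM : s₀ < max M (s₀ + 1) := lt_max_of_lt_right (lt_add_one s₀)
  filter_upwards [hφ, hlim.eventually_lt_const (Fint_pos hfpos hfint hM)] with y hy hlt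
  exact (le_max_left M _).trans (((strictAntiOn_Fint hf hfpos hfint).lt_iff_gt hy hM).1 hlt).le

theorem isProfileAt_Fint {B ρ : ℝ} (hf : ContDiffOn ℝ 2 f (Set.Ioi s₀))
    (hfpos : ∀ s, s₀ < s → 0 < f s)
    (hfint : ∀ s, s₀ < s → IntegrableOn (fun τ => 1 / f τ) (Set.Ioi s)) (hρ : ρ ≠ 0)
    (hφ : ∀ᶠ y in 𝓝 ρ, s₀ < φ y ∧ Fint f (φ y) = profileLevel B y) :
    IsProfileAt f (Fint f) φ B ρ := by
  obtain ⟨hs, hlevel⟩ := hφ.self_of_nhds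
  have hderiv : ContDiffOn ℝ 1 (deriv f) (Set.Ioi s₀) :=
    hf.deriv_of_isOpen isOpen_Ioi one_add_one_eq_two.le
  refine ⟨hlevel, (hfpos _ hs).ne',
    (hf.contDiffAt (Ioi_mem_nhds hs)).differentiableAt two_ne_zero,
    (hderiv.contDiffAt (Ioi_mem_nhds hs)).differentiableAt one_ne_zero,
    hasDerivAt_Fint hf.continuousOn hfpos hfint hs, ?_⟩
  refine (hasDerivAt_of_Fint_comp_eventuallyEq hf.continuousOn hfpos hfint hφ
    (hasDerivAt_profileLevel hρ)).congr_deriv ?_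
  rw [profileAmplitude, hlevel]
  ring

theorem isProfile_Fint {B K : ℝ} (hf : ContDiffOn ℝ 2 f (Set.Ioi s₀))
    (hfpos : ∀ s, s₀ < s → 0 < f s)
    (hfint : ∀ s, s₀ < s → IntegrableOn (fun τ => 1 / f τ) (Set.Ioi s))
    (hslope : Tendsto (fun s => deriv f s * Fint f s) atTop (𝓝 1))
    (hinvB2 : ∀ᶠ s in atTop, invB2 f (Fint f) s ∈ Set.Icc 0 K)
    (hφ : ∀ᶠ ρ in atTop, s₀ < φ ρ ∧ Fint f (φ ρ) = profileLevel B ρ) :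
    IsProfile f (Fint f) φ B K := by
  have hlim : Tendsto φ atTop atTop :=
    tendsto_atTop_of_Fint_comp hf.continuousOn hfpos hfint (hφ.mono fun _ h => h.1)
      ((tendsto_profileLevel B).congr' (hφ.mono fun _ h => h.2.symm))
  refine ⟨?_, hslope.comp hlim, hlim.eventually hinvB2⟩
  obtain ⟨ρ₁, hρ₁⟩ := eventually_atTop.1 hφ
  filter_upwards [eventually_gt_atTop ρ₁, eventually_ne_atTop 0] with ρ hρ hne
  exact isProfileAt_Fint hf hfpos hfint hne
    (eventually_of_mem (Ioi_mem_nhds hρ) fun y hy => hρ₁ y (le_of_lt hy))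

end TailIntegral

section Model

/-- The variable `x` in which the model pair has the form `g = (4 / (Bk)) x ^ (-1 - 1/B) exp x`,
`G = (B/4) (x + 1) exp (-x)` for every `B`, and which equals `ρ - 1` along `ψ`. -/
noncomputable def modelVar (B s : ℝ) : ℝ := if B = 1 then Real.exp s else s ^ (B / (B - 1))

/-- The constant `k` in `x' = k x ^ (1/B)` for `x = modelVar B`. -/
noncomputable def modelRate (B : ℝ) : ℝ := if B = 1 then 1 else B / (B - 1)

variable {B s ρ : ℝ}

theorem modelRate_ne_zero (hB : B ≠ 0) : modelRate B ≠ 0 := by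
  unfold modelRate
  split_ifs with h
  · exact one_ne_zero
  · exact div_ne_zero hB (sub_ne_zero.2 h)

theorem modelVar_pos (hs : B = 1 ∨ 0 < s) : 0 < modelVar B s := by
  unfold modelVar
  split_ifs with h
  · exact Real.exp_pos s
  · exact Real.rpow_pos_of_pos (hs.resolve_left h) _

theorem hasDerivAt_modelVar (hB : B ≠ 0) (hs : B = 1 ∨ 0 < s) :
    HasDerivAt (modelVar B) (modelRate B * modelVar B s ^ (1 / B)) s := by
  unfold modelVar modelRate
  split_ifs with h
  · simpa [h] using Real.hasDerivAt_exp s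
  · have hs := hs.resolve_left h
    have hB1 : B - 1 ≠ 0 := sub_ne_zero.2 h
    refine (Real.hasDerivAt_rpow_const (Or.inl hs.ne')).congr_deriv ?_
    rw [← Real.rpow_mul hs.le]
    congr 2
    field_simp
    ring

theorem modelg_eq (hB : B ≠ 0) (hs : B = 1 ∨ 0 < s) :
    modelg B s = 4 / (B * modelRate B) * modelVar B s ^ (-1 - 1 / B) * Real.exp (modelVar B s) := by
  unfold modelg modelVar modelRate
  split_ifs with h
  · rw [h, ← Real.exp_mul, mul_assoc, ← Real.exp_add]
    norm_num
    ring
  · have hs := hs.resolve_left h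
    have hB1 : B - 1 ≠ 0 := sub_ne_zero.2 h
    rw [← Real.rpow_mul hs.le]
    congr 3
    field_simp
    ring

theorem modelG_eq (B s : ℝ) :
    modelG B s = B / 4 * (modelVar B s + 1) * Real.exp (-modelVar B s) := by
  unfold modelG modelVar
  split_ifs with h
  · rw [h]
  · rfl

theorem eventually_eq_one_or_pos (hs : B = 1 ∨ 0 < s) : ∀ᶠ t in 𝓝 s, B = 1 ∨ 0 < t :=
  hs.elim (fun h => Eventually.of_forall fun _ => Or.inl h)
    fun h => (lt_mem_nhds h).mono fun _ => Or.inr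

theorem hasDerivAt_modelg (hB : B ≠ 0) (hs : B = 1 ∨ 0 < s) :
    HasDerivAt (modelg B) (4 / B * ((modelVar B s)⁻¹ - (1 + 1 / B) * (modelVar B s)⁻¹ ^ 2)
      * Real.exp (modelVar B s)) s := by
  have hx := modelVar_pos hs
  have hk := modelRate_ne_zero hB
  have hderiv := hasDerivAt_modelVar hB hs
  refine ((((hderiv.rpow_const (p := -1 - 1 / B) (Or.inl hx.ne')).const_mul
    (4 / (B * modelRate B))).mul hderiv.exp).congr_deriv ?_).congr_of_eventuallyEq
    ((eventually_eq_one_or_pos hs).mono fun t ht => modelg_eq hB ht)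
  have hpow : modelVar B s ^ (-1 - 1 / B) * modelVar B s ^ (1 / B) = (modelVar B s)⁻¹ := by
    rw [← Real.rpow_add hx, ← Real.rpow_neg_one]
    congr 1
    ring
  have hpow' : modelVar B s ^ (-1 - 1 / B - 1) * modelVar B s ^ (1 / B)
      = (modelVar B s)⁻¹ ^ 2 := by
    rw [Real.rpow_sub_one hx.ne', div_mul_eq_mul_div, hpow]
    ring
  have hconst : 4 / (B * modelRate B) * modelRate B = 4 / B := by field_simp
  linear_combination Real.exp (modelVar B s) * (modelVar B s ^ (1 / B) *
      ((-1 - 1 / B) * modelVar B s ^ (-1 - 1 / B - 1) + modelVar B s ^ (-1 - 1 / B))) * hconst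
    + 4 / B * Real.exp (modelVar B s) * (hpow + (-1 - 1 / B) * hpow')

theorem differentiableAt_deriv_modelg (hB : B ≠ 0) (hs : B = 1 ∨ 0 < s) :
    DifferentiableAt ℝ (deriv (modelg B)) s := by
  have hx := (hasDerivAt_modelVar hB hs).differentiableAt
  have hinv := hx.inv (modelVar_pos hs).ne'
  exact ((((hinv.sub ((hinv.pow 2).const_mul (1 + 1 / B))).const_mul (4 / B)).mul
    hx.exp)).congr_of_eventuallyEq
    ((eventually_eq_one_or_pos hs).mono fun t ht => (hasDerivAt_modelg hB ht).deriv)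

theorem modelg_ne_zero (hB : B ≠ 0) (hs : B = 1 ∨ 0 < s) : modelg B s ≠ 0 := by
  rw [modelg_eq hB hs]
  have hx := Real.rpow_pos_of_pos (modelVar_pos hs) (-1 - 1 / B)
  have hk := modelRate_ne_zero hB
  positivity

theorem hasDerivAt_modelG (hB : B ≠ 0) (hs : B = 1 ∨ 0 < s) :
    HasDerivAt (modelG B) (-1 / modelg B s) s := by
  have hx := modelVar_pos hs
  have hderiv := hasDerivAt_modelVar hB hs
  rw [show modelG B = _ from funext (modelG_eq B)]
  refine (((hderiv.add_const 1).const_mul (B / 4)).mul hderiv.neg.exp).congr_deriv ?_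
  have hpow : modelVar B s ^ (-1 - 1 / B) * modelVar B s ^ (1 / B) * modelVar B s = 1 := by
    rw [← Real.rpow_add hx, ← Real.rpow_add_one hx.ne']
    norm_num
  have hexp : Real.exp (modelVar B s) * Real.exp (-modelVar B s) = 1 := by
    rw [← Real.exp_add, add_neg_cancel, Real.exp_zero]
  have hk := modelRate_ne_zero hB
  have hconst : B / 4 * modelRate B * (4 / (B * modelRate B)) = 1 := by field_simp
  simp only [Pi.neg_apply]
  rw [eq_div_iff (modelg_ne_zero hB hs), modelg_eq hB hs]
  linear_combination -(Real.exp (modelVar B s) * Real.exp (-modelVar B s)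
      * (B / 4 * modelRate B * (4 / (B * modelRate B)))) * hpow
    - (Real.exp (modelVar B s) * Real.exp (-modelVar B s)) * hconst - hexp

theorem modelpsi_mem (hρ : 1 < ρ) : B = 1 ∨ 0 < modelpsi B ρ := by
  unfold modelpsi
  split_ifs with h
  · exact Or.inl h
  · exact Or.inr (Real.rpow_pos_of_pos (sub_pos.2 hρ) _)

theorem modelVar_modelpsi (hB : B ≠ 0) (hρ : 1 < ρ) : modelVar B (modelpsi B ρ) = ρ - 1 := by
  have hpos : 0 < ρ - 1 := sub_pos.2 hρ
  unfold modelVar modelpsi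
  split_ifs with h
  · exact Real.exp_log hpos
  · have hB1 : B - 1 ≠ 0 := sub_ne_zero.2 h
    rw [← Real.rpow_mul hpos.le, div_mul_div_cancel₀ hB, div_self hB1, Real.rpow_one]

theorem hasDerivAt_modelpsi (hB : B ≠ 0) (hρ : 1 < ρ) :
    HasDerivAt (modelpsi B) ((modelRate B)⁻¹ * (ρ - 1) ^ (-(1 / B))) ρ := by
  have hpos : 0 < ρ - 1 := sub_pos.2 hρ
  have hsub : HasDerivAt (fun ρ : ℝ => ρ - 1) 1 ρ := (hasDerivAt_id ρ).sub_const 1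
  unfold modelpsi modelRate
  split_ifs with h
  · refine (hsub.log hpos.ne').congr_deriv ?_
    rw [h, div_one, Real.rpow_neg_one, inv_one, one_mul, one_div]
  · have : B - 1 ≠ 0 := sub_ne_zero.2 h
    refine (hsub.rpow_const (Or.inl hpos.ne')).congr_deriv ?_
    rw [one_mul, inv_div]
    congr 2
    field_simp
    ring

theorem modelg_mul_modelG_modelpsi (hB : B ≠ 0) (hρ : 1 < ρ) :
    modelg B (modelpsi B ρ) * modelG B (modelpsi B ρ)
      = (modelRate B)⁻¹ * (ρ - 1) ^ (-1 - 1 / B) * ρ := by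
  have hk := modelRate_ne_zero hB
  rw [modelg_eq hB (modelpsi_mem hρ), modelG_eq, modelVar_modelpsi hB hρ, Real.exp_neg]
  field_simp
  ring

theorem isProfileAt_modelpsi (hB : B ≠ 0) (hρ : 1 < ρ) :
    IsProfileAt (modelg B) (modelG B) (modelpsi B) B ρ := by
  have hs : B = 1 ∨ 0 < modelpsi B ρ := modelpsi_mem hρ
  have hpos : 0 < ρ - 1 := sub_pos.2 hρ
  refine ⟨?_, modelg_ne_zero hB hs, (hasDerivAt_modelg hB hs).differentiableAt,
    differentiableAt_deriv_modelg hB hs, hasDerivAt_modelG hB hs,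
    (hasDerivAt_modelpsi hB hρ).congr_deriv ?_⟩
  · rw [modelG_eq, modelVar_modelpsi hB hρ, profileLevel, sub_add_cancel, neg_sub, sub_eq_neg_add]
  · rw [profileAmplitude, modelg_mul_modelG_modelpsi hB hρ, ← neg_add', add_comm, neg_add',
      Real.rpow_sub_one hpos.ne']
    have hρ0 : ρ ≠ 0 := by positivity
    field_simp

theorem profileSlope_modelpsi (hB : B ≠ 0) (hρ : 1 < ρ) :
    profileSlope (modelg B) (modelG B) (modelpsi B) ρ
      = 1 - 1 / B * (ρ - 1)⁻¹ - (1 + 1 / B) * (ρ - 1)⁻¹ ^ 2 := by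
  have hpos : 0 < ρ - 1 := sub_pos.2 hρ
  rw [profileSlope, (hasDerivAt_modelg hB (modelpsi_mem hρ)).deriv, modelG_eq,
    modelVar_modelpsi hB hρ, Real.exp_neg]
  field_simp
  ring

theorem hasDerivAt_profileSlope_modelpsi (hB : B ≠ 0) (hρ : 1 < ρ) :
    HasDerivAt (profileSlope (modelg B) (modelG B) (modelpsi B))
      (1 / B * (ρ - 1)⁻¹ ^ 2 + 2 * (1 + 1 / B) * (ρ - 1)⁻¹ ^ 3) ρ := by
  have hinv : HasDerivAt (fun x : ℝ => (x - 1)⁻¹) (-(ρ - 1)⁻¹ ^ 2) ρ := by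
    refine (((hasDerivAt_id ρ).sub_const 1).inv (sub_pos.2 hρ).ne').congr_deriv ?_
    rw [id, inv_pow, neg_div, one_div]
  refine ((((hinv.const_mul (1 / B)).const_sub 1).sub
    ((hinv.pow 2).const_mul (1 + 1 / B))).congr_deriv (by push_cast; ring)).congr_of_eventuallyEq
    (eventually_of_mem (Ioi_mem_nhds hρ) fun x hx => profileSlope_modelpsi hB hx)

theorem tendsto_inv_sub_one : Tendsto (fun ρ : ℝ => (ρ - 1)⁻¹) atTop (𝓝 0) :=
  tendsto_inv_atTop_zero.comp (tendsto_atTop_add_const_right atTop (-1) tendsto_id)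

theorem tendsto_profileSlope_modelpsi (hB : B ≠ 0) :
    Tendsto (profileSlope (modelg B) (modelG B) (modelpsi B)) atTop (𝓝 1) := by
  have h := ((tendsto_inv_sub_one.const_mul (1 / B)).const_sub 1).sub
    ((tendsto_inv_sub_one.pow 2).const_mul (1 + 1 / B))
  norm_num at h
  refine h.congr' ?_
  filter_upwards [eventually_gt_atTop 1] with ρ hρ
  rw [profileSlope_modelpsi hB hρ]
  norm_num

theorem tendsto_invB2_modelpsi (hB : 0 < B) :
    Tendsto (fun ρ => invB2 (modelg B) (modelG B) (modelpsi B ρ)) atTop (𝓝 (1 / B)) := by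
  have hr : Tendsto (fun ρ : ℝ => 1 + (ρ - 1)⁻¹) atTop (𝓝 1) := by
    simpa using tendsto_inv_sub_one.const_add 1
  have h := (((tendsto_inv_sub_one.const_mul (2 * (1 + 1 / B))).const_add (1 / B)).mul
    (hr.pow 3)).mul ((tendsto_logLevel_div hB).pow 2)
  rw [mul_zero, add_zero, one_pow, one_pow, mul_one, mul_one] at h
  refine h.congr' ?_
  filter_upwards [eventually_gt_atTop 1, (tendsto_logLevel hB).eventually_ne_atTop 0,
    (tendsto_profileSlope_modelpsi hB.ne').eventually_ne one_ne_zero] with ρ hρ hlog hslope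
  have hpos : 0 < ρ - 1 := sub_pos.2 hρ
  have hρ0 : 0 < ρ := one_pos.trans hρ
  have hderiv := ((isProfileAt_modelpsi hB.ne' hρ).hasDerivAt_profileSlope hslope hlog).unique
    (hasDerivAt_profileSlope_modelpsi hB.ne' hρ)
  rw [div_eq_iff (pow_ne_zero 2 hlog), one_sub_div hρ0.ne', ← mul_div_assoc,
    div_eq_iff hρ0.ne'] at hderiv
  refine mul_right_cancel₀ hpos.ne' (Eq.trans ?_ hderiv.symm)
  field_simp
  ring

theorem isProfile_modelpsi (hB : 0 < B) :
    IsProfile (modelg B) (modelG B) (modelpsi B) B (2 / B) where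
  eventually_isProfileAt :=
    (eventually_gt_atTop 1).mono fun _ hρ => isProfileAt_modelpsi hB.ne' hρ
  tendsto_slope := tendsto_profileSlope_modelpsi hB.ne'
  eventually_invB2_mem := (tendsto_invB2_modelpsi hB).eventually
    (Icc_mem_nhds (by positivity) (by gcongr; norm_num))

theorem Ifun_eq (f φ : ℝ → ℝ) (hB : B ≠ 0) (hρ : 1 < ρ) :
    Ifun f φ B ρ = profileWeight f (Fint f) φ ρ
      * slopeGap f (Fint f) φ (modelg B) (modelG B) (modelpsi B) ρ := by
  have hψ := isProfileAt_modelpsi hB hρ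
  have hG : modelG B (modelpsi B ρ) ≠ 0 := by
    have : 0 < ρ - 1 := sub_pos.2 hρ
    rw [modelG_eq, modelVar_modelpsi hB hρ]
    positivity
  rw [Ifun, hψ.hasDerivAt_profile.deriv, profileAmplitude, ← mul_pow, mul_pow _ (1 - 1 / ρ),
    mul_div_cancel_left₀ _ (pow_ne_zero 2 (mul_ne_zero hψ.ne_zero hG))]
  rfl

end Model

end EmdenFowler

open EmdenFowler in
/- The integral is taken as an improper one: it may converge only conditionally, and then the
Bochner integral over `Set.Ioi ρ` is `0` by convention. -/
theorem stmt8_general {f φ : ℝ → ℝ} {s₀ B K : ℝ} (hf : ContDiffOn ℝ 2 f (Set.Ioi s₀))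
    (hfpos : ∀ s, s₀ < s → 0 < f s)
    (hfint : ∀ s, s₀ < s → IntegrableOn (fun τ => 1 / f τ) (Set.Ioi s))
    (hB : 0 < B)
    (hf2a : Tendsto (fun s => deriv f s * Fint f s) atTop (nhds 1))
    (hf2b : ∀ᶠ s in atTop, invB2 f (Fint f) s ∈ Set.Icc 0 K)
    (hφ : ∀ ρ > (1 : ℝ), s₀ < φ ρ ∧ Fint f (φ ρ) = (B / 4) * ρ * Real.exp (-ρ + 1)) :
    ∃ C > (0 : ℝ), ∃ ρ₀ > (1 : ℝ), ∀ ρ ≥ ρ₀, ∃ J,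
      Tendsto (fun R => ∫ τ in ρ..R, kernel B ρ τ * Ifun f φ B τ) atTop (nhds J) ∧
      |Real.sqrt B * J| ≤ C * f (φ ρ) * Fint f (φ ρ) *
        sSup ((fun τ => eps1 f φ B τ + eps2 f φ B τ) '' Set.Ici ρ) := by
  have hprofile : IsProfile f (Fint f) φ B K :=
    isProfile_Fint hf hfpos hfint hf2a hf2b ((eventually_gt_atTop 1).mono hφ)
  have hamp : ∀ᶠ ρ in atTop, 0 ≤ profileAmplitude f (Fint f) φ ρ := by
    filter_upwards [eventually_gt_atTop 1] with ρ hρ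
    exact (mul_pos (hfpos _ (hφ ρ hρ).1) (Fint_pos hfpos hfint (hφ ρ hρ).1)).le
  obtain ⟨C, hC, hbound⟩ :=
    hprofile.exists_tendsto_integral_kernel_mul_slopeGap (isProfile_modelpsi hB) hB hamp
  obtain ⟨ρ₀, hρ₀⟩ := eventually_atTop.1 (hbound.and (eventually_gt_atTop 1))
  refine ⟨C, hC, ρ₀, (hρ₀ ρ₀ le_rfl).2, fun ρ hρ => ?_⟩
  obtain ⟨⟨J, hJ, hle⟩, hρ1⟩ := hρ₀ ρ hρ
  refine ⟨J, hJ.congr' ?_, by rwa [mul_assoc C]⟩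
  filter_upwards [eventually_ge_atTop ρ] with R hR
  refine intervalIntegral.integral_congr fun τ hτ => ?_
  rw [Set.uIcc_of_le hR] at hτ
  exact congrArg _ (Ifun_eq f φ hB.ne' (hρ1.trans_le hτ.1)).symm

/-- Lemma 2.2: the oscillatory integral of the inhomogeneous term is bounded by
`C f(φ(ρ))F(φ(ρ)) sup_{τ ≥ ρ}(ε₁(τ)+ε₂(τ))`. -/
theorem stmt8 (f φ : ℝ → ℝ) (s₀ B : ℝ) (hs₀ : 0 < s₀)
    (hf : ContDiffOn ℝ 2 f (Set.Ioi s₀))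
    (hfpos : ∀ s, s₀ < s → 0 < f s)
    (hf' : ∀ s, s₀ < s → 0 < deriv f s)
    (hfint : ∀ s, s₀ < s → IntegrableOn (fun τ => 1 / f τ) (Set.Ioi s))
    (hB : 1 ≤ B)
    (hf2a : Tendsto (fun s => deriv f s * Fint f s) atTop (nhds 1))
    (hf2b : Tendsto (fun s => invB2 f (Fint f) s) atTop (nhds (1 / B)))
    (hφ : ∀ ρ > (1 : ℝ), s₀ < φ ρ ∧ Fint f (φ ρ) = (B / 4) * ρ * Real.exp (-ρ + 1)) :
    ∃ C > (0 : ℝ), ∃ ρ₀ > (1 : ℝ), ∀ ρ ≥ ρ₀,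
      |Real.sqrt B * ∫ τ in Set.Ioi ρ, (ρ * τ) ^ ((1 : ℝ) / 4)
          * Real.sin ((2 / Real.sqrt B) * (ρ ^ ((1 : ℝ) / 2) - τ ^ ((1 : ℝ) / 2)))
          * Ifun f φ B τ|
        ≤ C * f (φ ρ) * Fint f (φ ρ) *
            sSup ((fun τ => eps1 f φ B τ + eps2 f φ B τ) '' Set.Ici ρ) := by
  have hBpos : 0 < B := one_pos.trans_le hB
  obtain ⟨C, hC, ρ₀, hρ₀, hbound⟩ := stmt8_general hf hfpos hfint hBpos hf2a
    (hf2b.eventually (Icc_mem_nhds (b := 2 / B) (by positivity) (by gcongr; norm_num))) hφ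
  refine ⟨C, hC, ρ₀, hρ₀, fun ρ hρ => ?_⟩
  obtain ⟨J, hJ, hle⟩ := hbound ρ hρ
  refine le_trans ?_ hle
  rw [abs_mul, abs_mul]
  exact mul_le_mul_of_nonneg_left (EmdenFowler.abs_setIntegral_Ioi_le_of_tendsto hJ)
    (abs_nonneg _)
end

section
/- Let q > 1 and r ∈ ℝ, and set F(s) := ∫_s^∞ τ^{−r}·e^{−τ^q} dτ for s > 0. There exists s₁ > 1 such that F is a strictly decreasing continuous bijection from [s₁,∞) onto (0, F(s₁)]; let F⁻¹ denote its inverse. Then there exist C > 0 and w₀ ∈ (0, F(s₁)) such that for all 0 < w < w₀: | F⁻¹(w) − ( −log w − ((q+r−1)/q)·log(−log w) + log(1/q) )^{1/q} | ≤ C · log(−log w) / (−log w)^{2 − 1/q}. -/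
/-!
Integrating the derivative of `τ ^ (1 - r - q) * exp (-τ ^ q) / q` over `(s, ∞)` gives
`F_r(s) = s ^ (1 - r - q) * exp (-s ^ q) / q - (q + r - 1) / q * F_{r+q}(s)`, in which
`F_{r+q}(s) ≤ s ^ (-q) * F_r(s)`. Taking logarithms, `L := -log F_r(s)` and `X := s ^ q` satisfy
`L = X + (q + r - 1) / q * log X + log q + O(1 / X)`. Since `log L - log X = O(log X / X)`, this
inverts to `X = L - (q + r - 1) / q * log L - log q + O(log L / L)`, and the power `1 / q` turns the
error into `L ^ (1 / q - 1) * O(log L / L)`. Finally `s = F⁻¹(w)` tends to `∞` as `w → 0⁺`.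
-/

open MeasureTheory

/-- `F(s) = ∫_s^∞ τ^{−r} e^{−τ^q} dτ`, the function `F` associated with
`f(s) = s^r e^{s^q}`. -/
noncomputable def F14 (q r s : ℝ) : ℝ := ∫ τ in Set.Ioi s, τ ^ (-r) * Real.exp (-(τ ^ q))

open Filter Set Topology Asymptotics

section Monotone

variable {α β : Type*} [LinearOrder β] [TopologicalSpace β] [OrderClosedTopology β] {b : β}

lemma lt_of_strictAntiOn_Ici_of_tendsto [LinearOrder α] [NoMaxOrder α] {f : α → β} {a : α}
    (hf : StrictAntiOn f (Ici a)) (hlim : Tendsto f atTop (𝓝 b)) {x : α} (hx : a ≤ x) :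
    b < f x := by
  obtain ⟨y, hxy⟩ := exists_gt x
  have hay : a ≤ y := hx.trans hxy.le
  have : Nonempty α := ⟨a⟩
  have hby : b ≤ f y := le_of_tendsto hlim <| (eventually_ge_atTop y).mono fun z hyz =>
    hf.antitoneOn hay (hay.trans hyz) hyz
  exact hby.trans_lt (hf hx hay hxy)

lemma bijOn_Ici_Ioc_of_strictAntiOn [ConditionallyCompleteLinearOrder α] [TopologicalSpace α]
    [OrderTopology α] [DenselyOrdered α] [NoMaxOrder α] {f : α → β} {a : α}
    (hf : StrictAntiOn f (Ici a)) (hcont : ContinuousOn f (Ici a))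
    (hlim : Tendsto f atTop (𝓝 b)) : BijOn f (Ici a) (Ioc b (f a)) := by
  have : Nonempty α := ⟨a⟩
  refine ⟨fun x hx => ⟨lt_of_strictAntiOn_Ici_of_tendsto hf hlim hx,
    hf.antitoneOn self_mem_Ici hx hx⟩, hf.injOn, ?_⟩
  exact isPreconnected_Ici.intermediate_value_Ioc self_mem_Ici
    (le_principal_iff.2 (Ici_mem_atTop a)) hcont hlim

lemma tendsto_atTop_of_rightInvOn_antitoneOn [LinearOrder α] {f : α → β} {g : β → α} {a : α}
    (hf : AntitoneOn f (Ici a)) (hfb : MapsTo f (Ici a) (Ioi b))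
    (hg : MapsTo g (Ioc b (f a)) (Ici a)) (hfg : RightInvOn g f (Ioc b (f a))) :
    Tendsto g (𝓝[>] b) atTop := by
  refine tendsto_atTop.2 fun T => ?_
  set M := max a T
  have haM : a ≤ M := le_max_left a T
  filter_upwards [Ioo_mem_nhdsGT (hfb haM)] with w hw
  have hwmem : w ∈ Ioc b (f a) := ⟨hw.1, hw.2.le.trans (hf self_mem_Ici haM haM)⟩
  by_contra! hlt
  have hle : f M ≤ f (g w) := hf (hg hwmem) haM (hlt.le.trans (le_max_right a T))
  exact (hfg hwmem ▸ hle).not_gt hw.2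

end Monotone

lemma strictAntiOn_integral_Ioi {f : ℝ → ℝ} {a : ℝ} (hf : IntegrableOn f (Ioi a))
    (hpos : ∀ x ∈ Ioi a, 0 < f x) : StrictAntiOn (fun s => ∫ x in Ioi s, f x) (Ici a) := by
  intro s hs t _ hst
  have hfs : IntegrableOn f (Ioi s) := hf.mono_set (Ioi_subset_Ioi hs)
  have hint : 0 < ∫ x in s..t, f x :=
    intervalIntegral.intervalIntegral_pos_of_pos_on
      ((intervalIntegrable_iff_integrableOn_Ioc_of_le hst.le).2
        (hfs.mono_set Ioc_subset_Ioi_self))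
      (fun x hx => hpos x (lt_of_le_of_lt hs hx.1)) hst
  rwa [← intervalIntegral.integral_Ioi_sub_Ioi hfs hst.le, sub_pos] at hint

section Asymptotics

variable {α : Type*} {l : Filter α} {u v : α → ℝ}

lemma comp_div_sub_isBigO {f : ℝ → ℝ} (hf : DifferentiableAt ℝ f 1) (huv : u ~[l] v)
    (hv : ∀ᶠ t in l, v t ≠ 0) :
    (fun t => f (u t / v t) - f 1) =O[l] fun t => (u t - v t) / v t := by
  have hlim : Tendsto (u / v) l (𝓝 1) := (isEquivalent_iff_tendsto_one hv).1 huv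
  refine (hf.isBigO_sub.comp_tendsto hlim).trans_eventuallyEq ?_
  filter_upwards [hv] with t ht
  simp only [Function.comp_apply, Pi.div_apply, sub_div, div_self ht]

lemma log_sub_log_isBigO (huv : u ~[l] v) (hv : ∀ᶠ t in l, v t ≠ 0) :
    (fun t => Real.log (u t) - Real.log (v t)) =O[l] fun t => (u t - v t) / v t := by
  refine EventuallyEq.trans_isBigO ?_
    (comp_div_sub_isBigO (Real.differentiableAt_log one_ne_zero) huv hv)
  filter_upwards [hv, huv.isTheta.eq_zero_iff] with t hvt huvt
  rw [Real.log_one, sub_zero, Real.log_div (huvt.not.2 hvt) hvt]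

lemma rpow_sub_rpow_isBigO (p : ℝ) (huv : u ~[l] v) (hv : ∀ᶠ t in l, 0 < v t) :
    (fun t => u t ^ p - v t ^ p) =O[l] fun t => v t ^ (p - 1) * (u t - v t) := by
  have hdiff : DifferentiableAt ℝ (fun x : ℝ => x ^ p) 1 :=
    Real.differentiableAt_rpow_const_of_ne p one_ne_zero
  refine ((isBigO_refl (fun t => v t ^ p) l).mul
    (comp_div_sub_isBigO hdiff huv (hv.mono fun _ => ne_of_gt))).congr' ?_ ?_
  · filter_upwards [hv, huv.eventually_pos hv] with t hvt hut
    rw [Real.one_rpow, mul_sub_one, Real.div_rpow hut.le hvt.le,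
      mul_div_cancel₀ _ (Real.rpow_pos_of_pos hvt p).ne']
  · filter_upwards [hv] with t hvt
    rw [Real.rpow_sub_one hvt.ne']
    ring

lemma exists_forall_Ioo_abs_le_of_isBigO_nhdsGT {u v : ℝ → ℝ} {a b : ℝ} (hab : a < b)
    (h : u =O[𝓝[>] a] v) (hv : ∀ᶠ x in 𝓝[>] a, 0 ≤ v x) :
    ∃ C > 0, ∃ c ∈ Ioo a b, ∀ x ∈ Ioo a c, |u x| ≤ C * v x := by
  obtain ⟨C, hC, hbound⟩ := h.exists_pos
  obtain ⟨m, ham, hmb⟩ := exists_between hab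
  obtain ⟨c, hc, hsub⟩ :=
    (mem_nhdsGT_iff_exists_mem_Ioc_Ioo_subset ham).1 (hbound.bound.and hv)
  refine ⟨C, hC, c, ⟨hc.1, hc.2.trans_lt hmb⟩, fun x hx => ?_⟩
  obtain ⟨hle, hnonneg⟩ := hsub hx
  rwa [Real.norm_of_nonneg hnonneg] at hle

end Asymptotics

lemma eventually_log_neg_log_div_rpow_nonneg (p : ℝ) :
    ∀ᶠ w in 𝓝[>] (0 : ℝ), 0 ≤ Real.log (-Real.log w) / (-Real.log w) ^ p := by
  have hlim : Tendsto (fun w => -Real.log w) (𝓝[>] 0) atTop :=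
    tendsto_neg_atBot_atTop.comp Real.tendsto_log_nhdsGT_zero
  filter_upwards [hlim.eventually_ge_atTop 1] with w hw
  exact div_nonneg (Real.log_nonneg hw) (Real.rpow_nonneg (zero_le_one.trans hw) p)

section LogExpansion

variable {α : Type*} {l : Filter α} {X L : α → ℝ} {a b : ℝ}

lemma isBigO_const_log_comp_atTop (hX : Tendsto X l atTop) (c : ℝ) :
    (fun _ => c) =O[l] fun t => Real.log (X t) :=
  (isLittleO_const_left.2 <| Or.inr <| tendsto_norm_atTop_atTop.comp
    (Real.tendsto_log_atTop.comp hX)).isBigO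

lemma isLittleO_log_div_self_comp_atTop (hX : Tendsto X l atTop) :
    (fun t => Real.log (X t) / X t) =o[l] fun _ => (1 : ℝ) :=
  (isLittleO_one_iff ℝ).2 <| (Real.isLittleO_log_id_atTop.tendsto_div_nhds_zero).comp hX

lemma sub_isBigO_log_of_log_expansion (hX : Tendsto X l atTop)
    (h : (fun t => L t - (X t + a * Real.log (X t) + b)) =O[l] fun t => Real.log (X t) / X t) :
    (fun t => L t - X t) =O[l] fun t => Real.log (X t) := by
  have hone := isBigO_const_log_comp_atTop hX
  have herr := (h.trans (isLittleO_log_div_self_comp_atTop hX).isBigO).trans (hone 1)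
  refine ((herr.add ((isBigO_refl _ l).const_mul_left a)).add (hone b)).congr_left fun t => ?_
  ring

lemma isEquivalent_of_log_expansion (hX : Tendsto X l atTop)
    (h : (fun t => L t - (X t + a * Real.log (X t) + b)) =O[l] fun t => Real.log (X t) / X t) :
    L ~[l] X :=
  (sub_isBigO_log_of_log_expansion hX h).trans_isLittleO
    (Real.isLittleO_log_id_atTop.comp_tendsto hX)

lemma sub_isBigO_log_div_of_log_expansion (hX : Tendsto X l atTop)
    (h : (fun t => L t - (X t + a * Real.log (X t) + b)) =O[l] fun t => Real.log (X t) / X t) :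
    (fun t => X t - (L t - a * Real.log (L t) - b)) =O[l] fun t => Real.log (L t) / L t := by
  have hLX : L ~[l] X := isEquivalent_of_log_expansion hX h
  have hlog : (fun t => Real.log (L t) - Real.log (X t)) =O[l] fun t => Real.log (X t) / X t :=
    (log_sub_log_isBigO hLX (hX.eventually_ne_atTop 0)).trans
      ((sub_isBigO_log_of_log_expansion hX h).mul (isBigO_refl (fun t => (X t)⁻¹) l))
  have hdiff : (fun t => X t - (L t - a * Real.log (L t) - b)) =O[l]
      fun t => Real.log (X t) / X t :=
    ((hlog.const_mul_left a).sub h).congr_left fun t => by ring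
  exact hdiff.trans ((hLX.log hX).symm.div hLX.symm).isBigO

lemma rpow_sub_rpow_isBigO_of_log_expansion (p : ℝ) (hX : Tendsto X l atTop)
    (h : (fun t => L t - (X t + a * Real.log (X t) + b)) =O[l] fun t => Real.log (X t) / X t) :
    (fun t => X t ^ p - (L t - a * Real.log (L t) - b) ^ p) =O[l]
      fun t => Real.log (L t) / L t ^ (2 - p) := by
  have hLX : L ~[l] X := isEquivalent_of_log_expansion hX h
  have hL : Tendsto L l atTop := hLX.symm.tendsto_atTop hX
  have hdiff := sub_isBigO_log_div_of_log_expansion hX h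
  set Y : α → ℝ := fun t => L t - a * Real.log (L t) - b
  have hXY : X ~[l] Y := by
    refine IsEquivalent.symm (IsLittleO.isEquivalent ?_)
    refine (hdiff.symm.trans_isLittleO (isLittleO_log_div_self_comp_atTop hL)).trans_isBigO ?_
    exact (isLittleO_const_left.2 <| Or.inr <| tendsto_norm_atTop_atTop.comp hX).isBigO
  have hYL : Y ~[l] L := hXY.symm.trans hLX.symm
  have hLpos : ∀ᶠ t in l, 0 < L t := hL.eventually_gt_atTop 0
  have hYpos : ∀ᶠ t in l, 0 < Y t := hYL.eventually_pos hLpos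
  have hpow : (fun t => Y t ^ (p - 1)) =O[l] fun t => L t ^ (p - 1) :=
    (hYL.isTheta.rpow (hYpos.mono fun _ => le_of_lt) (hLpos.mono fun _ => le_of_lt)).isBigO
  refine ((rpow_sub_rpow_isBigO p hXY hYpos).trans (hpow.mul hdiff)).trans_eventuallyEq ?_
  filter_upwards [hLpos] with t ht
  rw [show (2 : ℝ) - p = 1 - (p - 1) by ring, Real.rpow_sub ht 1, Real.rpow_one]
  field_simp

end LogExpansion

section F14

variable {q s : ℝ} (r : ℝ)

lemma integrableOn_Ioi_rpow_mul_exp_neg_rpow (t : ℝ) (hq : 0 < q) (hs : 0 < s) :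
    IntegrableOn (fun τ : ℝ => τ ^ t * Real.exp (-(τ ^ q))) (Ioi s) := by
  have hcont : ContinuousOn (fun τ : ℝ => τ ^ t * Real.exp (-(τ ^ q))) (Ici s) := by
    have hne : ∀ x ∈ Ici s, x ≠ 0 := fun x hx => (hs.trans_le hx).ne'
    exact (continuousOn_id.rpow_const fun x hx => Or.inl (hne x hx)).mul
      (continuousOn_id.rpow_const fun x hx => Or.inl (hne x hx)).neg.rexp
  have hpow : (fun τ : ℝ => τ ^ t) =O[atTop] fun τ => τ ^ max t 0 := by
    refine IsBigO.of_bound' ?_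
    filter_upwards [eventually_ge_atTop 1] with τ hτ
    have : 0 ≤ τ := zero_le_one.trans hτ
    rw [Real.norm_of_nonneg (by positivity), Real.norm_of_nonneg (by positivity)]
    exact Real.rpow_le_rpow_of_exponent_le hτ (le_max_left t 0)
  have hgamma : IntegrableOn (fun τ : ℝ => τ ^ max t 0 * Real.exp (-(τ ^ q))) (Ioi 0) :=
    integrableOn_rpow_mul_exp_neg_rpow (neg_one_lt_zero.trans_le (le_max_right t 0)) hq
  exact ((hcont.locallyIntegrableOn measurableSet_Ici).integrableOn_of_isBigO_atTop
    (hpow.mul (isBigO_refl _ _)) ⟨Ioi 0, Ioi_mem_atTop 0, hgamma⟩).mono_set Ioi_subset_Ici_self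

lemma F14.strictAntiOn (hq : 0 < q) (hs : 0 < s) : StrictAntiOn (F14 q r) (Ici s) :=
  strictAntiOn_integral_Ioi (integrableOn_Ioi_rpow_mul_exp_neg_rpow (-r) hq hs) fun x hx => by
    have : 0 < x := hs.trans hx
    positivity

lemma F14.continuousOn (hq : 0 < q) (hs : 0 < s) : ContinuousOn (F14 q r) (Ici s) :=
  (integrableOn_Ioi_rpow_mul_exp_neg_rpow (-r) hq hs).continuousOn_Ici_primitive_Ioi

lemma F14.tendsto_atTop (q r : ℝ) : Tendsto (F14 q r) atTop (𝓝 0) :=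
  tendsto_integral_Ioi_zero tendsto_id

lemma F14.pos (hq : 0 < q) (hs : 0 < s) : 0 < F14 q r s :=
  lt_of_strictAntiOn_Ici_of_tendsto (F14.strictAntiOn r hq hs) (F14.tendsto_atTop q r) le_rfl

lemma F14.add_le {p : ℝ} (hq : 0 < q) (hp : 0 ≤ p) (hs : 0 < s) :
    F14 q (r + p) s ≤ s ^ (-p) * F14 q r s := by
  rw [F14, F14, ← integral_const_mul]
  refine setIntegral_mono_on (integrableOn_Ioi_rpow_mul_exp_neg_rpow _ hq hs)
    ((integrableOn_Ioi_rpow_mul_exp_neg_rpow _ hq hs).const_mul _) measurableSet_Ioi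
    fun τ (hτ : s < τ) => ?_
  have hτ0 : 0 < τ := hs.trans hτ
  have hpow : τ ^ (-p) ≤ s ^ (-p) :=
    Real.rpow_le_rpow_of_nonpos hs hτ.le (neg_nonpos.2 hp)
  rw [← mul_assoc, neg_add_rev, Real.rpow_add hτ0]
  gcongr

lemma hasDerivAt_rpow_mul_exp_neg_rpow_div (hq : q ≠ 0) {x : ℝ} (hx : 0 < x) :
    HasDerivAt (fun τ : ℝ => τ ^ (1 - r - q) * Real.exp (-(τ ^ q)) / q)
      (-(x ^ (-r) * Real.exp (-(x ^ q)) +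
        (q + r - 1) / q * (x ^ (-(r + q)) * Real.exp (-(x ^ q))))) x := by
  have hpow := Real.hasDerivAt_rpow_const (x := x) (p := 1 - r - q) (Or.inl hx.ne')
  have hexp := (Real.hasDerivAt_rpow_const (x := x) (p := q) (Or.inl hx.ne')).fun_neg.exp
  refine ((hpow.fun_mul hexp).div_const q).congr_deriv ?_
  have hsplit : x ^ (-r) = x ^ (1 - r - q) * x ^ (q - 1) := by
    rw [← Real.rpow_add hx]
    ring_nf
  rw [hsplit, show 1 - r - q - 1 = -(r + q) by ring]
  field_simp
  ring

lemma F14.leading_sub_eq (hq : 0 < q) (hs : 0 < s) :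
    s ^ (1 - r - q) * Real.exp (-(s ^ q)) / q - F14 q r s =
      (q + r - 1) / q * F14 q (r + q) s := by
  have hint (t : ℝ) := integrableOn_Ioi_rpow_mul_exp_neg_rpow t hq hs
  have hderiv : ∀ x ∈ Ici s, HasDerivAt _ _ x := fun x hx =>
    hasDerivAt_rpow_mul_exp_neg_rpow_div r hq.ne' (hs.trans_le hx)
  have hderiv_int := ((hint (-r)).add ((hint (-(r + q))).const_mul ((q + r - 1) / q))).neg
  have hlim := tendsto_zero_of_hasDerivAt_of_integrableOn_Ioi
    (fun x hx => hderiv x (Ioi_subset_Ici_self hx)) hderiv_int ((hint (1 - r - q)).div_const q)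
  have hftc := integral_Ioi_of_hasDerivAt_of_tendsto' hderiv hderiv_int hlim
  rw [integral_neg, integral_add (hint _) ((hint _).const_mul _), integral_const_mul] at hftc
  unfold F14
  linarith

lemma F14.leading_sub_div_isBigO (hq : 0 < q) :
    (fun s => (s ^ (1 - r - q) * Real.exp (-(s ^ q)) / q - F14 q r s) / F14 q r s) =O[atTop]
      fun s => (s ^ q)⁻¹ := by
  refine IsBigO.of_bound (|(q + r - 1) / q|) ?_
  filter_upwards [eventually_gt_atTop 0] with s hs
  have hF : 0 < F14 q r s := F14.pos r hq hs
  have hF' : 0 < F14 q (r + q) s := F14.pos (r + q) hq hs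
  have hratio : 0 ≤ F14 q (r + q) s / F14 q r s := by positivity
  have hle : F14 q (r + q) s / F14 q r s ≤ (s ^ q)⁻¹ := by
    rw [div_le_iff₀ hF, ← Real.rpow_neg hs.le]
    exact F14.add_le r hq hq.le hs
  rw [F14.leading_sub_eq r hq hs, mul_div_assoc, norm_mul, Real.norm_of_nonneg hratio,
    Real.norm_of_nonneg (by positivity : 0 ≤ (s ^ q)⁻¹)]
  exact mul_le_mul_of_nonneg_left hle (abs_nonneg _)

lemma F14.leading_isEquivalent (hq : 0 < q) :
    (fun s => s ^ (1 - r - q) * Real.exp (-(s ^ q)) / q) ~[atTop] F14 q r := by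
  have hzero : Tendsto (fun s : ℝ => (s ^ q)⁻¹) atTop (𝓝 0) :=
    tendsto_inv_atTop_zero.comp (tendsto_rpow_atTop hq)
  refine (isLittleO_iff_tendsto' ?_).2 ((F14.leading_sub_div_isBigO r hq).trans_tendsto hzero)
  filter_upwards [eventually_gt_atTop 0] with s hs hF
  exact absurd hF (F14.pos r hq hs).ne'

lemma F14.neg_log_sub_isBigO (hq : 0 < q) :
    (fun s => -Real.log (F14 q r s) -
      (s ^ q + (q + r - 1) / q * Real.log (s ^ q) + Real.log q)) =O[atTop]
        fun s => (s ^ q)⁻¹ := by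
  have hne : ∀ᶠ s in atTop, F14 q r s ≠ 0 :=
    (eventually_gt_atTop 0).mono fun s hs => (F14.pos r hq hs).ne'
  refine EventuallyEq.trans_isBigO ?_
    ((log_sub_log_isBigO (F14.leading_isEquivalent r hq) hne).trans
      (F14.leading_sub_div_isBigO r hq))
  filter_upwards [eventually_gt_atTop 0] with s hs
  rw [Real.log_div (by positivity) hq.ne', Real.log_mul (by positivity) (by positivity),
    Real.log_rpow hs, Real.log_rpow hs, Real.log_exp]
  field_simp
  ring

theorem F14.self_sub_rpow_isBigO (hq : 0 < q) :
    (fun s => s - (-Real.log (F14 q r s) - (q + r - 1) / q * Real.log (-Real.log (F14 q r s))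
      + Real.log (1 / q)) ^ (1 / q)) =O[atTop]
        fun s => Real.log (-Real.log (F14 q r s)) / (-Real.log (F14 q r s)) ^ (2 - 1 / q) := by
  have hX : Tendsto (fun s : ℝ => s ^ q) atTop atTop := tendsto_rpow_atTop hq
  have hexp := (F14.neg_log_sub_isBigO r hq).trans <|
    ((isBigO_const_log_comp_atTop hX 1).mul (isBigO_refl (fun s : ℝ => (s ^ q)⁻¹) atTop)).congr_left
      fun s => one_mul _
  refine (rpow_sub_rpow_isBigO_of_log_expansion (1 / q) hX hexp).congr' ?_ EventuallyEq.rfl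
  filter_upwards [eventually_ge_atTop 0] with s hs
  rw [one_div, Real.rpow_rpow_inv hs hq.ne', Real.log_inv, ← sub_eq_add_neg]

theorem F14.rightInv_sub_rpow_isBigO {g : ℝ → ℝ} (hq : 0 < q) (hg : Tendsto g (𝓝[>] 0) atTop)
    (hFg : ∀ᶠ w in 𝓝[>] 0, F14 q r (g w) = w) :
    (fun w => g w - (-Real.log w - (q + r - 1) / q * Real.log (-Real.log w)
      + Real.log (1 / q)) ^ (1 / q)) =O[𝓝[>] 0]
        fun w => Real.log (-Real.log w) / (-Real.log w) ^ (2 - 1 / q) := by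
  refine ((F14.self_sub_rpow_isBigO r hq).comp_tendsto hg).congr' ?_ ?_ <;>
  · filter_upwards [hFg] with w hw
    simp only [Function.comp_apply, hw]

end F14

theorem stmt14_general {q s₁ : ℝ} (r : ℝ) (hq : 0 < q) (hs₁ : 0 < s₁) :
    StrictAntiOn (F14 q r) (Ici s₁) ∧
    ContinuousOn (F14 q r) (Ici s₁) ∧
    BijOn (F14 q r) (Ici s₁) (Ioc 0 (F14 q r s₁)) ∧
    ∃ Finv : ℝ → ℝ,
      (∀ w ∈ Ioc (0 : ℝ) (F14 q r s₁), Finv w ∈ Ici s₁ ∧ F14 q r (Finv w) = w) ∧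
      ∃ C > (0 : ℝ), ∃ w₀ ∈ Ioo (0 : ℝ) (F14 q r s₁), ∀ w ∈ Ioo (0 : ℝ) w₀,
        |Finv w - (-Real.log w - ((q + r - 1) / q) * Real.log (-Real.log w)
            + Real.log (1 / q)) ^ (1 / q)|
          ≤ C * Real.log (-Real.log w) / (-Real.log w) ^ (2 - 1 / q) := by
  have hanti := F14.strictAntiOn r hq hs₁
  have hcont := F14.continuousOn r hq hs₁
  have hbij := bijOn_Ici_Ioc_of_strictAntiOn hanti hcont (F14.tendsto_atTop q r)
  set Finv := Function.invFunOn (F14 q r) (Ici s₁)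
  have hmaps : MapsTo Finv (Ioc 0 (F14 q r s₁)) (Ici s₁) := hbij.surjOn.mapsTo_invFunOn
  have hinv : RightInvOn Finv (F14 q r) (Ioc 0 (F14 q r s₁)) := hbij.surjOn.rightInvOn_invFunOn
  refine ⟨hanti, hcont, hbij, Finv, fun w hw => ⟨hmaps hw, hinv hw⟩, ?_⟩
  have hlim : Tendsto Finv (𝓝[>] 0) atTop := tendsto_atTop_of_rightInvOn_antitoneOn
    hanti.antitoneOn (fun x hx => (hbij.mapsTo hx).1) hmaps hinv
  have hF₁ : 0 < F14 q r s₁ := F14.pos r hq hs₁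
  have hFinv : ∀ᶠ w in 𝓝[>] 0, F14 q r (Finv w) = w :=
    Filter.mem_of_superset (Ioc_mem_nhdsGT hF₁) hinv
  simp only [mul_div_assoc]
  exact exists_forall_Ioo_abs_le_of_isBigO_nhdsGT hF₁
    (F14.rightInv_sub_rpow_isBigO r hq hlim hFinv) (eventually_log_neg_log_div_rpow_nonneg _)

/-- Asymptotic expansion (3.4) of `F⁻¹` near `0` for `f(s) = s^r e^{s^q}`. -/
theorem stmt14 (q r : ℝ) (hq : 1 < q) :
    ∃ s₁ > (1 : ℝ),
      StrictAntiOn (F14 q r) (Set.Ici s₁) ∧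
      ContinuousOn (F14 q r) (Set.Ici s₁) ∧
      Set.BijOn (F14 q r) (Set.Ici s₁) (Set.Ioc 0 (F14 q r s₁)) ∧
      ∃ Finv : ℝ → ℝ,
        (∀ w ∈ Set.Ioc (0 : ℝ) (F14 q r s₁), Finv w ∈ Set.Ici s₁ ∧ F14 q r (Finv w) = w) ∧
        ∃ C > (0 : ℝ), ∃ w₀ ∈ Set.Ioo (0 : ℝ) (F14 q r s₁), ∀ w ∈ Set.Ioo (0 : ℝ) w₀,
          |Finv w - (-Real.log w - ((q + r - 1) / q) * Real.log (-Real.log w)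
              + Real.log (1 / q)) ^ (1 / q)|
            ≤ C * Real.log (-Real.log w) / (-Real.log w) ^ (2 - 1 / q) :=
  ⟨2, one_lt_two, stmt14_general r (zero_lt_one.trans hq) two_pos⟩
end

section
/- Let q > 1 and r ∈ ℝ, and let f(s) := s^r·e^{s^q} for s > 0. Then there exist C > 0 and s₁ > 1 such that for all s ≥ s₁: | 1/B₁[f](s) − (1 − 1/q) | ≤ C·(log s)/s^q and | 1/B₂[f](s) − (1 − 1/q) | ≤ C·(log s)/s^q. -/
open MeasureTheory Filter

open Asymptotics Set Topology

/-!
The substitution `u = s^q` turns `F(s)` into `Γ((1 - r)/q, u) / q`, an upper incomplete gamma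
function. Normalised by its leading term `u^{a-1} e^{-u}`, it satisfies
`E_a(u) = 1 + (a - 1) u⁻¹ E_{a-1}(u)` by integration by parts, and iterating this yields the
expansion of `E_a` in powers of `u⁻¹` to any order. Hence `f' F = 1 - (1 - 1/q) u⁻¹ + O(u⁻²)` and
`-log F = u + O(log u)`, which settles `B₁`. For `B₂` write `f f'' F / f' = (f f'' / f'²) (f' F)`,
where `f f'' / f'²` is an explicit rational function of `u`; the terms of order `u⁻¹` cancel and
the product is `1 + (1 - 1/q) u⁻² + O(u⁻³)`.
-/

lemma isBigO_mul_sub_mul {α R : Type*} [NormedRing R] {l : Filter α} {f g : α → R}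
    {a b : R} {δ : α → ℝ} (hδ : δ =O[l] fun _ => (1 : ℝ)) (hf : (fun x => f x - a) =O[l] δ)
    (hg : (fun x => g x - b) =O[l] δ) :
    (fun x => f x * g x - a * b) =O[l] δ := by
  have hg_one : g =O[l] fun _ => (1 : ℝ) := by
    simpa only [sub_add_cancel] using (hg.trans hδ).add (isBigO_const_const b one_ne_zero l)
  have hfst : (fun x => (f x - a) * g x) =O[l] δ := by simpa only [mul_one] using hf.mul hg_one
  refine (hfst.add (hg.const_mul_left a)).congr_left fun x => ?_
  rw [sub_mul, mul_sub, sub_add_sub_cancel]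

/-- The upper incomplete gamma function `Γ(a, u) = ∫_u^∞ e^{-t} t^{a-1} dt`, meant for `u > 0`;
it expresses `Fint` for `s^r e^{s^q}`. -/
noncomputable def upperGamma (a u : ℝ) : ℝ := ∫ t in Ioi u, Real.exp (-t) * t ^ (a - 1)

/-- The upper incomplete gamma function divided by its leading term `u^{a-1} e^{-u}` at infinity. -/
noncomputable def scaledUpperGamma (a u : ℝ) : ℝ := u ^ (1 - a) * Real.exp u * upperGamma a u

section UpperGamma

variable {u : ℝ}

lemma integrableOn_upperGamma (a : ℝ) (hu : 0 < u) :
    IntegrableOn (fun t => Real.exp (-t) * t ^ (a - 1)) (Ioi u) := by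
  refine integrable_of_isBigO_exp_neg one_half_pos (fun t ht => ?_)
    (Real.Gamma_integrand_isLittleO _).isBigO
  have ht0 : t ≠ 0 := (hu.trans_le ht).ne'
  fun_prop (disch := simp [ht0])

lemma upperGamma_pos (a : ℝ) (hu : 0 < u) : 0 < upperGamma a u := by
  have hpos : ∀ t ∈ Ioi u, 0 < Real.exp (-t) * t ^ (a - 1) := fun t ht => by
    have : 0 < t := hu.trans ht
    positivity
  rw [upperGamma, setIntegral_pos_iff_support_of_nonneg_ae
    (ae_restrict_of_forall_mem measurableSet_Ioi fun t ht => (hpos t ht).le)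
    (integrableOn_upperGamma a hu),
    inter_eq_right.2 fun t ht => Function.mem_support.2 (hpos t ht).ne', Real.volume_Ioi]
  exact ENNReal.zero_lt_top

lemma upperGamma_sub_one_le (a : ℝ) (hu : 0 < u) :
    upperGamma (a - 1) u ≤ u⁻¹ * upperGamma a u := by
  rw [upperGamma, upperGamma, ← integral_const_mul]
  refine setIntegral_mono_on (integrableOn_upperGamma _ hu)
    ((integrableOn_upperGamma _ hu).const_mul _) measurableSet_Ioi fun t ht => ?_
  have ht0 : 0 < t := hu.trans ht
  calc Real.exp (-t) * t ^ (a - 1 - 1) = t⁻¹ * (Real.exp (-t) * t ^ (a - 1)) := by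
        rw [Real.rpow_sub_one ht0.ne']; ring
    _ ≤ u⁻¹ * (Real.exp (-t) * t ^ (a - 1)) := by gcongr; exact ht.le

lemma upperGamma_eq_add_mul_upperGamma_sub_one (a : ℝ) (hu : 0 < u) :
    upperGamma a u = Real.exp (-u) * u ^ (a - 1) + (a - 1) * upperGamma (a - 1) u := by
  have hderiv : ∀ t ∈ Ici u, HasDerivAt (fun t => Real.exp (-t) * t ^ (a - 1))
      ((a - 1) * (Real.exp (-t) * t ^ (a - 1 - 1)) - Real.exp (-t) * t ^ (a - 1)) t := by
    intro t ht
    have ht0 : t ≠ 0 := (hu.trans_le ht).ne'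
    refine ((hasDerivAt_neg t).exp.mul (Real.hasDerivAt_rpow_const (Or.inl ht0))).congr_deriv ?_
    ring
  have hlim : Tendsto (fun t => Real.exp (-t) * t ^ (a - 1)) atTop (𝓝 0) := by
    simpa only [neg_mul, one_mul, mul_comm (Real.exp _)] using
      tendsto_rpow_mul_exp_neg_mul_atTop_nhds_zero (a - 1) 1 one_pos
  have hint := (integrableOn_upperGamma (a - 1) hu).const_mul (a - 1)
  have h := integral_Ioi_of_hasDerivAt_of_tendsto' hderiv
    (hint.sub (integrableOn_upperGamma a hu)) hlim
  rw [integral_sub hint (integrableOn_upperGamma a hu), integral_const_mul] at h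
  simp only [upperGamma]
  linarith

lemma scaledUpperGamma_pos (a : ℝ) (hu : 0 < u) : 0 < scaledUpperGamma a u := by
  have := upperGamma_pos a hu
  unfold scaledUpperGamma
  positivity

lemma scaledUpperGamma_sub_one (a : ℝ) (hu : 0 < u) :
    scaledUpperGamma (a - 1) u = u ^ (1 - a) * Real.exp u * (u * upperGamma (a - 1) u) := by
  rw [scaledUpperGamma, show 1 - (a - 1) = 1 - a + 1 by ring, Real.rpow_add_one hu.ne']
  ring

lemma scaledUpperGamma_sub_one_le (a : ℝ) (hu : 0 < u) :
    scaledUpperGamma (a - 1) u ≤ scaledUpperGamma a u := by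
  rw [scaledUpperGamma_sub_one a hu, scaledUpperGamma]
  gcongr
  exact (le_inv_mul_iff₀ hu).1 (upperGamma_sub_one_le a hu)

lemma scaledUpperGamma_eq_one_add (a : ℝ) (hu : 0 < u) :
    scaledUpperGamma a u = 1 + (a - 1) * u⁻¹ * scaledUpperGamma (a - 1) u := by
  have hlead : u ^ (1 - a) * Real.exp u * (Real.exp (-u) * u ^ (a - 1)) = 1 := by
    rw [← neg_sub a 1, Real.rpow_neg hu.le, Real.exp_neg]
    field_simp
  rw [scaledUpperGamma_sub_one a hu, scaledUpperGamma,
    upperGamma_eq_add_mul_upperGamma_sub_one a hu, mul_add, hlead]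
  field_simp

-- The recurrence bounds `scaledUpperGamma a` by one plus half of itself once `2 * |a - 1| ≤ u`.
lemma scaledUpperGamma_isBigO_one (a : ℝ) :
    scaledUpperGamma a =O[atTop] fun _ => (1 : ℝ) := by
  refine IsBigO.of_bound 2 ?_
  filter_upwards [eventually_gt_atTop 0, eventually_ge_atTop (2 * |a - 1|)] with u hu hau
  have hcoef : (a - 1) * u⁻¹ ≤ 1 / 2 := by
    rw [← div_eq_mul_inv, div_le_iff₀ hu]
    linarith [le_abs_self (a - 1)]
  have habsorb : scaledUpperGamma a u ≤ 1 + 1 / 2 * scaledUpperGamma a u := by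
    calc scaledUpperGamma a u = 1 + (a - 1) * u⁻¹ * scaledUpperGamma (a - 1) u :=
          scaledUpperGamma_eq_one_add a hu
      _ ≤ 1 + 1 / 2 * scaledUpperGamma (a - 1) u := by
          gcongr
          exact (scaledUpperGamma_pos _ hu).le
      _ ≤ 1 + 1 / 2 * scaledUpperGamma a u := by
          gcongr
          exact scaledUpperGamma_sub_one_le a hu
  rw [Real.norm_of_nonneg (scaledUpperGamma_pos a hu).le, norm_one]
  linarith

lemma scaledUpperGamma_sub_sum_isBigO (a : ℝ) (n : ℕ) :
    (fun u => scaledUpperGamma a u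
        - ∑ k ∈ Finset.range n, (∏ j ∈ Finset.range k, (a - 1 - j)) * u⁻¹ ^ k)
      =O[atTop] fun u => u⁻¹ ^ n := by
  induction n generalizing a with
  | zero => simpa using scaledUpperGamma_isBigO_one a
  | succ n ih =>
    refine (((isBigO_refl (fun u : ℝ => u⁻¹) atTop).const_mul_left (a - 1)).mul
      (ih (a - 1))).congr' ?_ (.of_forall fun u => (pow_succ' _ n).symm)
    filter_upwards [eventually_gt_atTop 0] with u hu
    have hshift (k : ℕ) : (∏ j ∈ Finset.range (k + 1), (a - 1 - j)) * u⁻¹ ^ (k + 1)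
        = (a - 1) * u⁻¹ * ((∏ j ∈ Finset.range k, (a - 1 - 1 - j)) * u⁻¹ ^ k) := by
      simp only [Finset.prod_range_succ', Nat.cast_add, Nat.cast_one, Nat.cast_zero, sub_zero,
        add_comm _ (1 : ℝ), ← sub_sub]
      ring
    rw [scaledUpperGamma_eq_one_add a hu, Finset.sum_range_succ', Finset.sum_congr rfl
      fun k _ => hshift k, ← Finset.mul_sum]
    simp only [Finset.range_zero, Finset.prod_empty, pow_zero]
    ring

lemma tendsto_scaledUpperGamma (a : ℝ) : Tendsto (scaledUpperGamma a) atTop (𝓝 1) := by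
  have h : (fun u => scaledUpperGamma a u - 1) =O[atTop] fun u => u⁻¹ := by
    simpa using scaledUpperGamma_sub_sum_isBigO a 1
  exact tendsto_sub_nhds_zero_iff.1 (h.trans_tendsto tendsto_inv_atTop_zero)

lemma log_upperGamma (a : ℝ) (hu : 0 < u) :
    Real.log (upperGamma a u) = (a - 1) * Real.log u - u + Real.log (scaledUpperGamma a u) := by
  rw [scaledUpperGamma, Real.log_mul (by positivity) (upperGamma_pos a hu).ne',
    Real.log_mul (by positivity) (by positivity), Real.log_rpow hu, Real.log_exp]
  ring

lemma neg_log_upperGamma_sub_isBigO (a : ℝ) :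
    (fun u => -Real.log (upperGamma a u) - u) =O[atTop] Real.log := by
  have hlogE : (fun u => Real.log (scaledUpperGamma a u)) =O[atTop] Real.log :=
    (((tendsto_scaledUpperGamma a).log one_ne_zero).isBigO_one ℝ).trans
      (Real.isLittleO_const_log_atTop (c := 1)).isBigO
  refine (((isBigO_refl Real.log atTop).const_mul_left (a - 1)).add hlogE).neg_left.congr' ?_ .rfl
  filter_upwards [eventually_gt_atTop 0] with u hu
  rw [log_upperGamma a hu]
  ring

end UpperGamma

/-- The function `s ^ r * e^(s^q)` of the theorem; `q` comes first since it stays fixed when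
differentiating. -/
noncomputable def powExp (q r s : ℝ) : ℝ := s ^ r * Real.exp (s ^ q)

section PowExp

variable {s : ℝ}

lemma powExp_add (q p c : ℝ) (hs : 0 < s) : powExp q (p + c) s = s ^ c * powExp q p s := by
  rw [powExp, powExp, Real.rpow_add hs]
  ring

lemma powExp_pos (q p : ℝ) (hs : 0 < s) : 0 < powExp q p s := by
  unfold powExp
  positivity

lemma hasDerivAt_powExp (q p : ℝ) (hs : 0 < s) :
    HasDerivAt (powExp q p) (p * powExp q (p - 1) s + q * powExp q (p - 1 + q) s) s := by
  have hpow (c : ℝ) := Real.hasDerivAt_rpow_const (x := s) (p := c) (Or.inl hs.ne')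
  refine ((hpow p).mul (hpow q).exp).congr_deriv ?_
  rw [powExp_add q _ _ hs, powExp, Real.rpow_sub_one hs.ne', Real.rpow_sub_one hs.ne']
  ring

lemma deriv_powExp (q r : ℝ) (hs : 0 < s) :
    deriv (powExp q r) s = powExp q (r - 1) s * (r + q * s ^ q) := by
  rw [(hasDerivAt_powExp q r hs).deriv, powExp_add q _ _ hs]
  ring

lemma deriv_deriv_powExp (q r : ℝ) (hs : 0 < s) :
    deriv (deriv (powExp q r)) s
      = powExp q (r - 2) s * ((r + q * s ^ q) ^ 2 + q * (q - 1) * s ^ q - r) := by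
  have hderiv : deriv (powExp q r) =ᶠ[𝓝 s]
      fun x => r * powExp q (r - 1) x + q * powExp q (r - 1 + q) x := by
    filter_upwards [lt_mem_nhds hs] with x hx using (hasDerivAt_powExp q r hx).deriv
  rw [hderiv.deriv_eq, (((hasDerivAt_powExp q (r - 1) hs).const_mul r).fun_add
    ((hasDerivAt_powExp q (r - 1 + q) hs).const_mul q)).deriv,
    show r - 1 + q - 1 = r - 2 + q by ring, show r - 1 - 1 = r - 2 by ring]
  simp only [powExp_add q _ _ hs]
  ring

lemma powExp_mul_deriv_deriv_div_sq (q r : ℝ) (hs : 0 < s) :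
    powExp q r s * deriv (deriv (powExp q r)) s / deriv (powExp q r) s ^ 2
      = ((r + q * s ^ q) ^ 2 + q * (q - 1) * s ^ q - r) / (r + q * s ^ q) ^ 2 := by
  have hf : powExp q r s = s * powExp q (r - 1) s := by
    simpa only [sub_add_cancel, Real.rpow_one] using powExp_add q (r - 1) 1 hs
  have hf_one : powExp q (r - 1) s = s * powExp q (r - 2) s := by
    simpa only [show r - 2 + 1 = r - 1 by ring, Real.rpow_one] using powExp_add q (r - 2) 1 hs
  have hpos := powExp_pos q (r - 2) hs
  rw [deriv_deriv_powExp q r hs, deriv_powExp q r hs, hf, hf_one, mul_pow,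
    ← mul_div_mul_left _ ((r + q * s ^ q) ^ 2) (by positivity : (s * powExp q (r - 2) s) ^ 2 ≠ 0)]
  ring

lemma Fint_powExp {q : ℝ} (r : ℝ) (hq : 0 < q) (hs : 0 < s) :
    Fint (powExp q r) s = q⁻¹ * upperGamma ((1 - r) / q) (s ^ q) := by
  have hsubst := integral_comp_rpow_Ioi_of_pos' (c := s ^ q)
    (g := fun t => Real.exp (-t) * t ^ ((1 - r) / q - 1)) hq (by positivity)
  rw [Real.rpow_rpow_inv hs.le hq.ne'] at hsubst
  rw [upperGamma, ← hsubst, ← integral_const_mul]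
  refine setIntegral_congr_fun measurableSet_Ioi fun t ht => ?_
  have ht0 : 0 < t := hs.trans ht
  have hexp : q * ((1 - r) / q - 1) = -r + (1 - q) := by field_simp; ring
  simp only [powExp, smul_eq_mul]
  rw [← Real.rpow_mul ht0.le, hexp, Real.rpow_add ht0, ← neg_sub q 1, Real.rpow_neg ht0.le,
    Real.rpow_neg ht0.le, Real.exp_neg]
  field_simp

lemma deriv_powExp_mul_Fint {q : ℝ} (r : ℝ) (hq : 0 < q) (hs : 0 < s) :
    deriv (powExp q r) s * Fint (powExp q r) s
      = (r + q * s ^ q) / (q * s ^ q) * scaledUpperGamma ((1 - r) / q) (s ^ q) := by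
  have hpow : (s ^ q) ^ (1 - (1 - r) / q) = s ^ q * s ^ (r - 1) := by
    rw [← Real.rpow_mul hs.le, ← Real.rpow_add hs]
    congr 1
    field_simp
    ring
  rw [deriv_powExp q r hs, Fint_powExp r hq hs, scaledUpperGamma, hpow, powExp]
  field_simp

end PowExp

section Expansion

variable {q : ℝ}

lemma isBigO_one_comp_inv_of_continuousAt {E : Type*} [SeminormedAddCommGroup E] {K : ℝ → E}
    (hK : ContinuousAt K 0) : (fun u => K u⁻¹) =O[atTop] fun _ => (1 : ℝ) :=
  (hK.tendsto.comp tendsto_inv_atTop_zero).isBigO_one ℝ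

lemma div_mul_scaledUpperGamma_sub_isBigO (r : ℝ) (hq : q ≠ 0) :
    (fun u => (r + q * u) / (q * u) * scaledUpperGamma ((1 - r) / q) u
        - (1 - (1 - 1 / q) * u⁻¹)) =O[atTop] fun u => u⁻¹ ^ 2 := by
  have hexp : (fun u => scaledUpperGamma ((1 - r) / q) u - (1 + ((1 - r) / q - 1) * u⁻¹))
      =O[atTop] fun u => u⁻¹ ^ 2 := by
    simpa [Finset.sum_range_succ, Finset.prod_range_succ] using
      scaledUpperGamma_sub_sum_isBigO ((1 - r) / q) 2
  have hbdd : (fun u : ℝ => 1 + r / q * u⁻¹) =O[atTop] fun _ => (1 : ℝ) :=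
    isBigO_one_comp_inv_of_continuousAt (K := fun x => 1 + r / q * x) (by fun_prop)
  have hsum := (hbdd.mul hexp).add
    ((isBigO_refl (fun u : ℝ => u⁻¹ ^ 2) atTop).const_mul_left (r / q * ((1 - r) / q - 1))
      |>.congr_right fun u => (one_mul _).symm)
  refine hsum.congr' ?_ (.of_forall fun u => one_mul _)
  filter_upwards [eventually_ne_atTop 0] with u hu
  field_simp
  ring

lemma eventually_add_mul_ne_zero (r : ℝ) (hq : q ≠ 0) : ∀ᶠ u : ℝ in atTop, r + q * u ≠ 0 := by
  filter_upwards [eventually_ne_atTop (-r / q)] with u hu h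
  exact hu (by field_simp; linarith)

lemma div_sq_mul_scaledUpperGamma_sub_isBigO (r : ℝ) (hq : q ≠ 0) :
    (fun u => ((r + q * u) ^ 2 + q * (q - 1) * u - r) / (r + q * u) ^ 2
          * ((r + q * u) / (q * u) * scaledUpperGamma ((1 - r) / q) u)
        - (1 + (1 - 1 / q) * u⁻¹ ^ 2)) =O[atTop] fun u => u⁻¹ ^ 3 := by
  set a := (1 - r) / q with ha
  let ρ := r / q
  let β := 1 - 1 / q
  let N : ℝ → ℝ := fun x => (1 + ρ * x) ^ 2 + β * x - ρ / q * x ^ 2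
  -- `(c + d * x) * x ^ 3` is
  -- `N x * (1 + (a - 1) * x + (a - 1) * (a - 2) * x ^ 2) - (1 + ρ * x) * (1 + β * x ^ 2)`.
  let c := (2 * ρ + β) * ((a - 1) * (a - 2)) + (ρ ^ 2 - ρ / q) * (a - 1) - β * ρ
  let d := (ρ ^ 2 - ρ / q) * ((a - 1) * (a - 2))
  have hexp : (fun u => scaledUpperGamma a u
      - (1 + (a - 1) * u⁻¹ + (a - 1) * (a - 2) * u⁻¹ ^ 2)) =O[atTop] fun u => u⁻¹ ^ 3 := by
    refine (scaledUpperGamma_sub_sum_isBigO a 3).congr_left fun u => ?_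
    simp only [Finset.sum_range_succ, Finset.prod_range_succ, Finset.sum_range_zero,
      Finset.prod_range_zero]
    push_cast
    ring
  have hbdd : (fun u : ℝ => N u⁻¹ / (1 + ρ * u⁻¹)) =O[atTop] fun _ => (1 : ℝ) :=
    isBigO_one_comp_inv_of_continuousAt (K := fun x => N x / (1 + ρ * x))
      (ContinuousAt.div (by fun_prop) (by fun_prop) (by simp))
  have hrem : (fun u : ℝ => (c + d * u⁻¹) / (1 + ρ * u⁻¹)) =O[atTop] fun _ => (1 : ℝ) :=
    isBigO_one_comp_inv_of_continuousAt (K := fun x => (c + d * x) / (1 + ρ * x))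
      (ContinuousAt.div (by fun_prop) (by fun_prop) (by simp))
  have hsum := (hbdd.mul hexp).add (hrem.mul (isBigO_refl (fun u : ℝ => u⁻¹ ^ 3) atTop))
  refine hsum.congr' ?_ (.of_forall fun u => one_mul _)
  filter_upwards [eventually_ne_atTop 0, eventually_add_mul_ne_zero r hq] with u hu hru
  generalize scaledUpperGamma a u = E
  have hden : 1 + ρ * u⁻¹ = (r + q * u) / (q * u) := by simp only [ρ]; field_simp; ring
  rw [hden]
  simp only [N, hden, c, d, β, ρ, ha]
  field_simp
  ring

end Expansion

section Estimates

variable {q : ℝ}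

lemma inv_rpow_isBigO_log_div_rpow (q : ℝ) :
    (fun s : ℝ => (s ^ q)⁻¹) =O[atTop] fun s => Real.log s / s ^ q := by
  simpa only [div_eq_mul_inv, one_mul] using
    (Real.isLittleO_const_log_atTop (c := 1)).isBigO.mul
      (isBigO_refl (fun s : ℝ => (s ^ q)⁻¹) atTop)

lemma log_div_rpow_isBigO_one (hq : 0 < q) :
    (fun s : ℝ => Real.log s / s ^ q) =O[atTop] fun _ => (1 : ℝ) :=
  (isLittleO_log_rpow_atTop hq).tendsto_div_nhds_zero.isBigO_one ℝ

lemma inv_rpow_mul_neg_log_Fint_powExp_sub_isBigO (r : ℝ) (hq : 0 < q) :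
    (fun s => (s ^ q)⁻¹ * -Real.log (Fint (powExp q r) s) - 1)
      =O[atTop] fun s => Real.log s / s ^ q := by
  have hlog_rpow : (fun s : ℝ => Real.log (s ^ q)) =O[atTop] Real.log :=
    ((isBigO_refl Real.log atTop).const_mul_left q).congr' (by
      filter_upwards [eventually_gt_atTop 0] with s hs using (Real.log_rpow hs q).symm) .rfl
  have hlogΓ := ((neg_log_upperGamma_sub_isBigO ((1 - r) / q)).comp_tendsto
    (tendsto_rpow_atTop hq)).trans hlog_rpow
  have hlogF := (Real.isLittleO_const_log_atTop (c := Real.log q)).isBigO.add hlogΓ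
  refine (hlogF.mul (isBigO_refl (fun s : ℝ => (s ^ q)⁻¹) atTop)).congr' ?_
    (.of_forall fun s => (div_eq_mul_inv _ _).symm)
  filter_upwards [eventually_gt_atTop 0] with s hs
  have hu : 0 < s ^ q := Real.rpow_pos_of_pos hs q
  rw [Fint_powExp r hq hs, Real.log_mul (by positivity) (upperGamma_pos _ hu).ne', Real.log_inv]
  simp only [Function.comp_apply]
  field_simp
  ring

lemma deriv_powExp_mul_Fint_sub_isBigO (r : ℝ) (hq : 0 < q) :
    (fun s => deriv (powExp q r) s * Fint (powExp q r) s - (1 - (1 - 1 / q) * (s ^ q)⁻¹))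
      =O[atTop] fun s => (s ^ q)⁻¹ ^ 2 := by
  refine ((div_mul_scaledUpperGamma_sub_isBigO r hq.ne').comp_tendsto
    (tendsto_rpow_atTop hq)).congr' ?_ .rfl
  filter_upwards [eventually_gt_atTop 0] with s hs
  rw [deriv_powExp_mul_Fint r hq hs, Function.comp_apply]

lemma powExp_ratio_mul_deriv_mul_Fint_sub_isBigO (r : ℝ) (hq : 0 < q) :
    (fun s => powExp q r s * deriv (deriv (powExp q r)) s / deriv (powExp q r) s ^ 2
          * (deriv (powExp q r) s * Fint (powExp q r) s)
        - (1 + (1 - 1 / q) * (s ^ q)⁻¹ ^ 2)) =O[atTop] fun s => (s ^ q)⁻¹ ^ 3 := by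
  refine ((div_sq_mul_scaledUpperGamma_sub_isBigO r hq.ne').comp_tendsto
    (tendsto_rpow_atTop hq)).congr' ?_ .rfl
  filter_upwards [eventually_gt_atTop 0] with s hs
  rw [powExp_mul_deriv_deriv_div_sq q r hs, deriv_powExp_mul_Fint r hq hs, Function.comp_apply]

lemma rpow_pow_mul_isBigO_log_div_rpow {g : ℝ → ℝ} (n : ℕ)
    (hg : g =O[atTop] fun s => (s ^ q)⁻¹ ^ (n + 1)) :
    (fun s => (s ^ q) ^ n * g s) =O[atTop] fun s => Real.log s / s ^ q := by
  refine (((isBigO_refl (fun s : ℝ => (s ^ q) ^ n) atTop).mul hg).congr' .rfl ?_).trans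
    (inv_rpow_isBigO_log_div_rpow q)
  filter_upwards [eventually_gt_atTop 0] with s hs
  have hu : s ^ q ≠ 0 := (Real.rpow_pos_of_pos hs q).ne'
  rw [pow_succ, ← mul_assoc, ← mul_pow, mul_inv_cancel₀ hu, one_pow, one_mul]

lemma rpow_mul_one_sub_deriv_powExp_mul_Fint_sub_isBigO (r : ℝ) (hq : 0 < q) :
    (fun s => s ^ q * (1 - deriv (powExp q r) s * Fint (powExp q r) s) - (1 - 1 / q))
      =O[atTop] fun s => Real.log s / s ^ q := by
  refine (rpow_pow_mul_isBigO_log_div_rpow 1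
    (deriv_powExp_mul_Fint_sub_isBigO r hq).neg_left).congr' ?_ .rfl
  filter_upwards [eventually_gt_atTop 0] with s hs
  have hu : s ^ q ≠ 0 := (Real.rpow_pos_of_pos hs q).ne'
  field_simp
  ring

lemma deriv_powExp_mul_Fint_sub_one_isBigO (r : ℝ) (hq : 0 < q) :
    (fun s => deriv (powExp q r) s * Fint (powExp q r) s - 1)
      =O[atTop] fun s => Real.log s / s ^ q := by
  have hinv := inv_rpow_isBigO_log_div_rpow q
  have hsq : (fun s : ℝ => (s ^ q)⁻¹ ^ 2) =O[atTop] fun s => Real.log s / s ^ q := by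
    simpa only [pow_two, mul_one] using hinv.mul (hinv.trans (log_div_rpow_isBigO_one hq))
  refine (((deriv_powExp_mul_Fint_sub_isBigO r hq).trans hsq).sub
    (hinv.const_mul_left (1 - 1 / q))).congr_left fun s => ?_
  ring

lemma rpow_sq_mul_powExp_ratio_mul_sub_isBigO (r : ℝ) (hq : 0 < q) :
    (fun s => (s ^ q) ^ 2 * (powExp q r s * deriv (deriv (powExp q r)) s
          / deriv (powExp q r) s ^ 2 * (deriv (powExp q r) s * Fint (powExp q r) s) - 1)
        - (1 - 1 / q)) =O[atTop] fun s => Real.log s / s ^ q := by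
  refine (rpow_pow_mul_isBigO_log_div_rpow 2
    (powExp_ratio_mul_deriv_mul_Fint_sub_isBigO r hq)).congr' ?_ .rfl
  filter_upwards [eventually_gt_atTop 0] with s hs
  have hu : s ^ q ≠ 0 := (Real.rpow_pos_of_pos hs q).ne'
  field_simp
  ring

lemma invB2_eq_of_deriv_ne_zero {f G : ℝ → ℝ} {s : ℝ} (hf : deriv f s ≠ 0) :
    invB2 f G s = deriv f s * G s * (-Real.log (G s)) ^ 2
      * (f s * deriv (deriv f) s / deriv f s ^ 2 * (deriv f s * G s) - 1) := by
  rw [invB2]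
  field_simp

lemma eventually_deriv_powExp_ne_zero (r : ℝ) (hq : 0 < q) :
    ∀ᶠ s in atTop, deriv (powExp q r) s ≠ 0 := by
  filter_upwards [eventually_gt_atTop 0, (tendsto_rpow_atTop hq).eventually
    (eventually_add_mul_ne_zero r hq.ne')] with s hs hru
  rw [deriv_powExp q r hs]
  exact mul_ne_zero (powExp_pos q _ hs).ne' hru

lemma invB1_powExp_sub_isBigO (r : ℝ) (hq : 0 < q) :
    (fun s => invB1 (powExp q r) (Fint (powExp q r)) s - (1 - 1 / q))
      =O[atTop] fun s => Real.log s / s ^ q := by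
  refine (isBigO_mul_sub_mul (log_div_rpow_isBigO_one hq)
    (inv_rpow_mul_neg_log_Fint_powExp_sub_isBigO r hq)
    (rpow_mul_one_sub_deriv_powExp_mul_Fint_sub_isBigO r hq)).congr' ?_ .rfl
  filter_upwards [eventually_gt_atTop 0] with s hs
  have hu : s ^ q ≠ 0 := (Real.rpow_pos_of_pos hs q).ne'
  rw [invB1]
  field_simp

lemma invB2_powExp_sub_isBigO (r : ℝ) (hq : 0 < q) :
    (fun s => invB2 (powExp q r) (Fint (powExp q r)) s - (1 - 1 / q))
      =O[atTop] fun s => Real.log s / s ^ q := by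
  have hδ := log_div_rpow_isBigO_one hq
  have hlog := inv_rpow_mul_neg_log_Fint_powExp_sub_isBigO r hq
  refine (isBigO_mul_sub_mul hδ
    (isBigO_mul_sub_mul hδ (deriv_powExp_mul_Fint_sub_one_isBigO r hq)
      (isBigO_mul_sub_mul hδ hlog hlog))
    (rpow_sq_mul_powExp_ratio_mul_sub_isBigO r hq)).congr' ?_ .rfl
  filter_upwards [eventually_gt_atTop 0, eventually_deriv_powExp_ne_zero r hq] with s hs hf
  have hu : s ^ q ≠ 0 := (Real.rpow_pos_of_pos hs q).ne'
  rw [invB2_eq_of_deriv_ne_zero hf]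
  field_simp

end Estimates

theorem stmt15_general (q r : ℝ) (hq : 0 < q) :
    ∃ C > (0 : ℝ), ∃ s₁ > (1 : ℝ), ∀ s ≥ s₁,
      |invB1 (fun x => x ^ r * Real.exp (x ^ q))
          (Fint (fun x => x ^ r * Real.exp (x ^ q))) s - (1 - 1 / q)|
        ≤ C * Real.log s / s ^ q
      ∧ |invB2 (fun x => x ^ r * Real.exp (x ^ q))
          (Fint (fun x => x ^ r * Real.exp (x ^ q))) s - (1 - 1 / q)|
        ≤ C * Real.log s / s ^ q := by
  obtain ⟨C, hC, hbound⟩ :=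
    ((invB1_powExp_sub_isBigO r hq).prod_left (invB2_powExp_sub_isBigO r hq)).exists_pos
  obtain ⟨s₁, hs₁, h⟩ := (atTop_basis_Ioi' 1).eventually_iff.1 hbound.bound
  refine ⟨C, hC, s₁ + 1, by linarith, fun s hs => ?_⟩
  have hs_one : 1 < s := by linarith
  have hnorm : ‖Real.log s / s ^ q‖ = Real.log s / s ^ q :=
    Real.norm_of_nonneg (div_nonneg (Real.log_nonneg hs_one.le) (by positivity))
  have hs_bound := h (show s₁ < s by linarith)
  rw [hnorm, ← mul_div_assoc, Prod.norm_def] at hs_bound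
  exact max_le_iff.1 hs_bound

/-- Estimates (3.5a), (3.5b): for `f(s) = s^r e^{s^q}` with `q > 1`,
`1/B₁[f](s) = 1 − 1/q + O((log s)/s^q)` and `1/B₂[f](s) = 1 − 1/q + O((log s)/s^q)`. -/
theorem stmt15 (q r : ℝ) (hq : 1 < q) :
    ∃ C > (0 : ℝ), ∃ s₁ > (1 : ℝ), ∀ s ≥ s₁,
      |invB1 (fun x => x ^ r * Real.exp (x ^ q))
          (Fint (fun x => x ^ r * Real.exp (x ^ q))) s - (1 - 1 / q)|
        ≤ C * Real.log s / s ^ q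
      ∧ |invB2 (fun x => x ^ r * Real.exp (x ^ q))
          (Fint (fun x => x ^ r * Real.exp (x ^ q))) s - (1 - 1 / q)|
        ≤ C * Real.log s / s ^ q :=
  stmt15_general q r (one_pos.trans hq)
end

section
/- Let q > 1 and r ∈ ℝ, and let f(s) := e^{s^q·(log s)^r} for s > 1. Then there exist C > 0 and s₁ > e such that for all s ≥ s₁: | 1/B₁[f](s) − (1 − 1/q) | ≤ C/(log s) and | 1/B₂[f](s) − (1 − 1/q) | ≤ C/(log s); in particular lim_{s→∞} 1/B₂[f](s) = 1 − 1/q, i.e. B = q/(q−1). -/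
open MeasureTheory Filter

/-!
Write `f = e^φ` with `φ = s^q (log s)^r` and `F(s) = ∫_s^∞ e^{-φ}`. The curvature
`κ = φ φ'' / φ'²` is a smooth function of `1 / log s` with value `k = 1 - 1/q` at `0`, so
`κ = k + O(1 / log s)` and `φ κ' / φ' = O(1 / log s)`. Integrating `e^{-φ}` by parts twice suggests
`f' F ≈ 1 - κ/φ + k (1 + k)/φ²`. Differentiating `e^{-φ}/φ'` times the right-hand side gives
`-e^{-φ} (1 + O(φ⁻² / log s))`, so integrating back shows that the error of the approximation is
`O(φ⁻² / log s)`. Since `-log F = φ (1 + O(1 / log s))`, the quantity `1/B₁` is asymptotically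
`φ (1 - f' F)`, which reads off the first coefficient `κ → k`, and `1/B₂` is asymptotically
`φ² (f' F (1 + κ/φ) - 1)`, where the first order terms cancel and `k (1 + k) - κ² → k` remains.
-/

open Asymptotics Set Topology

section TendstoRate

variable {α 𝕜 : Type*} [NormedField 𝕜] {l : Filter α} {ε : α → ℝ} {g h : α → 𝕜} {c d : 𝕜}

/-- `g = c + O(ε)` along the filter `l`: convergence to `c` with rate `ε`. -/
def TendstoRate (g : α → 𝕜) (l : Filter α) (ε : α → ℝ) (c : 𝕜) : Prop :=
  (fun x => g x - c) =O[l] ε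

theorem tendstoRate_zero_iff : TendstoRate g l ε 0 ↔ g =O[l] ε := by
  simp only [TendstoRate, sub_zero]

theorem tendstoRate_const (c : 𝕜) : TendstoRate (fun _ => c) l ε c := by
  simpa only [TendstoRate, sub_self] using isBigO_zero ε l

namespace TendstoRate

theorem congr' (hg : TendstoRate g l ε c) (hgh : g =ᶠ[l] h) : TendstoRate h l ε c :=
  IsBigO.congr' hg (hgh.sub EventuallyEq.rfl) EventuallyEq.rfl

theorem tendsto (hg : TendstoRate g l ε c) (hε : Tendsto ε l (𝓝 0)) : Tendsto g l (𝓝 c) :=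
  tendsto_sub_nhds_zero_iff.1 (IsBigO.trans_tendsto hg hε)

theorem add (hg : TendstoRate g l ε c) (hh : TendstoRate h l ε d) :
    TendstoRate (fun x => g x + h x) l ε (c + d) :=
  (IsBigO.add hg hh).congr_left fun _ => by ring

theorem sub (hg : TendstoRate g l ε c) (hh : TendstoRate h l ε d) :
    TendstoRate (fun x => g x - h x) l ε (c - d) :=
  (IsBigO.sub hg hh).congr_left fun _ => by ring

theorem mul (hg : TendstoRate g l ε c) (hh : TendstoRate h l ε d) (hε : Tendsto ε l (𝓝 0)) :
    TendstoRate (fun x => g x * h x) l ε (c * d) := by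
  have hh_bdd : h =O[l] (fun _ => (1 : ℝ)) := (hh.tendsto hε).isBigO_one ℝ
  have hg_term : (fun x => (g x - c) * h x) =O[l] ε := by
    simpa only [mul_one] using IsBigO.mul hg hh_bdd
  exact (hg_term.add (IsBigO.const_mul_left hh c)).congr_left fun _ => by ring

end TendstoRate

theorem DifferentiableAt.tendstoRate_comp {g : α → ℝ} {c : ℝ} {K : ℝ → ℝ}
    (hK : DifferentiableAt ℝ K c) (hg : TendstoRate g l ε c) (hε : Tendsto ε l (𝓝 0)) :
    TendstoRate (fun x => K (g x)) l ε (K c) :=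
  (hK.isBigO_sub.comp_tendsto (hg.tendsto hε)).trans hg

end TendstoRate

section TailIntegral

variable {g e δ W : ℝ → ℝ}

theorem eventually_integral_Ioi_eq_of_hasDerivAt_neg
    (hg_nonneg : ∀ᶠ x in atTop, 0 ≤ g x)
    (hW : ∀ᶠ x in atTop, HasDerivAt W (-g x) x) (hW_lim : Tendsto W atTop (𝓝 0)) :
    ∀ᶠ s in atTop, IntegrableOn g (Ioi s) ∧ ∫ x in Ioi s, g x = W s := by
  filter_upwards [eventually_forall_ge_atTop.2 hg_nonneg, eventually_forall_ge_atTop.2 hW]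
    with s hg_nonneg hW
  have hneg : ∀ x ∈ Ioi s, -g x ≤ 0 := fun x hx => neg_nonpos.2 (hg_nonneg x (le_of_lt hx))
  refine ⟨by simpa using (integrableOn_Ioi_deriv_of_nonpos' hW hneg hW_lim).neg, ?_⟩
  simpa [integral_neg] using integral_Ioi_of_hasDerivAt_of_nonpos' hW hneg hW_lim

theorem eventually_integrableOn_Ioi_of_norm_le {g₀ : ℝ → ℝ}
    (hg_cont : ∀ᶠ x in atTop, ContinuousAt g x) (hle : ∀ᶠ x in atTop, ‖g x‖ ≤ g₀ x)
    (hg₀ : ∀ᶠ s in atTop, IntegrableOn g₀ (Ioi s)) :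
    ∀ᶠ s in atTop, IntegrableOn g (Ioi s) := by
  filter_upwards [eventually_forall_ge_atTop.2 hg_cont, eventually_forall_ge_atTop.2 hle, hg₀]
    with s hg_cont hle hg₀
  have hg_meas : AEStronglyMeasurable g (volume.restrict (Ioi s)) :=
    ContinuousOn.aestronglyMeasurable
      (fun x hx => (hg_cont x (le_of_lt hx)).continuousWithinAt) measurableSet_Ioi
  exact hg₀.mono' hg_meas
    ((ae_restrict_mem measurableSet_Ioi).mono fun x hx => hle x (le_of_lt hx))

theorem norm_integral_sub_integral_mul_one_add_le {α : Type*} [MeasurableSpace α]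
    {ν : Measure α} {g e : α → ℝ} {η : ℝ} (hg : Integrable g ν)
    (hge : Integrable (fun x => g x * (1 + e x)) ν) (hg_nonneg : ∀ᵐ x ∂ν, 0 ≤ g x)
    (he_half : ∀ᵐ x ∂ν, -(1 / 2) ≤ e x) (he : ∀ᵐ x ∂ν, |e x| ≤ η) :
    ‖∫ x, g x ∂ν - ∫ x, g x * (1 + e x) ∂ν‖ ≤ 2 * η * ∫ x, g x * (1 + e x) ∂ν := by
  rw [← integral_sub hg hge, ← integral_const_mul]
  refine norm_integral_le_of_norm_le (hge.const_mul _) ?_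
  filter_upwards [hg_nonneg, he_half, he] with x hg he_half he
  have hη : 0 ≤ η := (abs_nonneg _).trans he
  calc ‖g x - g x * (1 + e x)‖ = g x * |e x| := by
        rw [show g x - g x * (1 + e x) = g x * -e x by ring, norm_mul, norm_neg,
          Real.norm_of_nonneg hg, Real.norm_eq_abs]
    _ ≤ g x * (2 * (1 + e x) * η) := by gcongr; nlinarith
    _ = 2 * η * (g x * (1 + e x)) := by ring

theorem integral_Ioi_sub_isBigO_of_hasDerivAt
    (hg_cont : ∀ᶠ x in atTop, ContinuousAt g x) (hg_nonneg : ∀ᶠ x in atTop, 0 ≤ g x)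
    (hW : ∀ᶠ x in atTop, HasDerivAt W (-(g x * (1 + e x))) x) (hW_lim : Tendsto W atTop (𝓝 0))
    (he : e =O[atTop] δ) (hδ : Tendsto δ atTop (𝓝 0))
    (hδ_anti : ∀ᶠ s in atTop, ∀ x ≥ s, |δ x| ≤ |δ s|) :
    (fun s => (∫ x in Ioi s, g x) - W s) =O[atTop] fun s => δ s * W s := by
  have he_half : ∀ᶠ x in atTop, -(1 / 2) ≤ e x :=
    (he.trans_tendsto hδ).eventually_const_le (by norm_num)
  have hge_nonneg : ∀ᶠ x in atTop, 0 ≤ g x * (1 + e x) := by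
    filter_upwards [hg_nonneg, he_half] with x hg he
    exact mul_nonneg hg (by linarith)
  -- `g (1 + e)` is integrable as minus the derivative of the monotone convergent `W`.
  have hge_int := eventually_integral_Ioi_eq_of_hasDerivAt_neg hge_nonneg hW hW_lim
  have hg_int : ∀ᶠ s in atTop, IntegrableOn g (Ioi s) := by
    refine eventually_integrableOn_Ioi_of_norm_le hg_cont ?_
      (hge_int.mono fun s hs => hs.1.const_mul 2)
    filter_upwards [hg_nonneg, he_half] with x hg he
    rw [Real.norm_of_nonneg hg]
    nlinarith
  obtain ⟨C, hC, he_bound⟩ := he.exists_pos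
  refine IsBigO.of_bound (2 * C) ?_
  filter_upwards [eventually_forall_ge_atTop.2 hg_nonneg, eventually_forall_ge_atTop.2 he_half,
    eventually_forall_ge_atTop.2 hge_nonneg, eventually_forall_ge_atTop.2 he_bound.bound,
    hδ_anti, hge_int, hg_int] with s hg he_half hge he hδ ⟨hge_int, hge_eq⟩ hg_int
  have on_tail {p : ℝ → Prop} (hp : ∀ x ≥ s, p x) : ∀ᵐ x ∂volume.restrict (Ioi s), p x :=
    (ae_restrict_mem measurableSet_Ioi).mono fun x hx => hp x (le_of_lt hx)
  have he_le : ∀ x ≥ s, |e x| ≤ C * |δ s| := fun x hx =>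
    (he x hx).trans (mul_le_mul_of_nonneg_left (hδ x hx) hC.le)
  have hW_nonneg : 0 ≤ W s := hge_eq ▸ integral_nonneg_of_ae (on_tail hge)
  calc ‖(∫ x in Ioi s, g x) - W s‖ ≤ 2 * (C * |δ s|) * W s := by
        simpa only [hge_eq] using norm_integral_sub_integral_mul_one_add_le hg_int hge_int
          (on_tail hg) (on_tail he_half) (on_tail he_le)
    _ = 2 * C * ‖δ s * W s‖ := by
        rw [norm_mul, Real.norm_of_nonneg hW_nonneg, Real.norm_eq_abs]
        ring

end TailIntegral

/-- Exponents `φ → ∞` of functions `f = exp ∘ φ` whose curvature `κ = φ φ'' / φ'²` is `k + O(ε)`.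
The derivatives enter through `φ'`, the curvature `κ` and its logarithmic derivative
`μ = φ κ' / φ'` with respect to `φ`, so that `φ'' = κ φ'² / φ` and `κ' = μ φ' / φ`. -/
structure HasCurvatureRate (ε φ φ' κ μ : ℝ → ℝ) (k : ℝ) : Prop where
  tendsto_rate : Tendsto ε atTop (𝓝 0)
  rate_anti : ∀ᶠ s in atTop, ∀ x ≥ s, |ε x| ≤ |ε s|
  pos : ∀ᶠ x in atTop, 0 < φ x
  deriv_pos : ∀ᶠ x in atTop, 0 < φ' x
  hasDerivAt : ∀ᶠ x in atTop, HasDerivAt φ (φ' x) x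
  hasDerivAt_deriv : ∀ᶠ x in atTop, HasDerivAt φ' (κ x * φ' x ^ 2 / φ x) x
  hasDerivAt_curvature : ∀ᶠ x in atTop, HasDerivAt κ (μ x * φ' x / φ x) x
  curvature : TendstoRate κ atTop ε k
  curvature_deriv : TendstoRate μ atTop ε 0
  inv : TendstoRate (fun x => (φ x)⁻¹) atTop ε 0
  log_deriv_div : TendstoRate (fun x => Real.log (φ' x) / φ x) atTop ε 0

/-- The second order expansion in `1/φ` of `f' F`, where `f = exp ∘ φ` and `F = ∫_s^∞ 1/f`.
The coefficient `k (1 + k)` is the one for which the `φ⁻²` terms of `tailDefect` cancel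
in the limit. -/
noncomputable def tailExpansion (φ κ : ℝ → ℝ) (k x : ℝ) : ℝ :=
  1 - κ x / φ x + k * (1 + k) / φ x ^ 2

/-- The relative defect of `e^{-φ} (tailExpansion φ κ k) / φ'` as an antiderivative
of `-e^{-φ}`. -/
noncomputable def tailDefect (φ κ μ : ℝ → ℝ) (k x : ℝ) : ℝ :=
  (k * (1 + k) - κ x - κ x * κ x + μ x + k * (1 + k) * (κ x + 2) * (φ x)⁻¹) / φ x ^ 2

/-- The product `f' F` for `f = exp ∘ φ` and `F = ∫_s^∞ 1/f`, with `φ'` the derivative of `φ`. -/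
noncomputable def scaledTail (φ φ' : ℝ → ℝ) (x : ℝ) : ℝ :=
  φ' x * Real.exp (φ x) * Fint (fun y => Real.exp (φ y)) x

theorem hasDerivAt_tailExpansion_div {φ φ' κ μ : ℝ → ℝ} {k x : ℝ} (hφ : 0 < φ x)
    (hφ' : 0 < φ' x) (hdφ : HasDerivAt φ (φ' x) x)
    (hdφ' : HasDerivAt φ' (κ x * φ' x ^ 2 / φ x) x) (hdκ : HasDerivAt κ (μ x * φ' x / φ x) x) :
    HasDerivAt (fun y => tailExpansion φ κ k y / (φ' y * Real.exp (φ y)))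
      (-(1 / Real.exp (φ x) * (1 + tailDefect φ κ μ k x))) x := by
  have hnum : HasDerivAt (tailExpansion φ κ k)
      ((-μ x * φ' x + κ x * φ' x) / φ x ^ 2 - 2 * k * (1 + k) * φ' x / φ x ^ 3) x := by
    refine (((hdκ.div hdφ hφ.ne').const_sub 1).add
      ((hasDerivAt_const x (k * (1 + k))).div (hdφ.pow 2) (pow_ne_zero 2 hφ.ne'))).congr_deriv ?_
    simp only [Pi.pow_apply]
    field_simp
    ring
  refine (hnum.div (hdφ'.mul hdφ.exp) (mul_pos hφ' (Real.exp_pos _)).ne').congr_deriv ?_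
  simp only [tailExpansion, tailDefect, Pi.mul_apply]
  field_simp
  ring

namespace HasCurvatureRate

variable {ε φ φ' κ μ : ℝ → ℝ} {k : ℝ}

theorem tendsto_inv (h : HasCurvatureRate ε φ φ' κ μ k) :
    Tendsto (fun x => (φ x)⁻¹) atTop (𝓝 0) :=
  h.inv.tendsto h.tendsto_rate

theorem tendsto_exponent (h : HasCurvatureRate ε φ φ' κ μ k) : Tendsto φ atTop atTop := by
  refine ((tendsto_nhdsWithin_iff.2 ⟨h.tendsto_inv, ?_⟩).inv_tendsto_nhdsGT_zero).congr fun x => ?_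
  · exact h.pos.mono fun x hx => inv_pos.2 hx
  · simp

theorem eventually_forall_ge_le (h : HasCurvatureRate ε φ φ' κ μ k) :
    ∀ᶠ s in atTop, ∀ x ≥ s, φ s ≤ φ x := by
  filter_upwards [eventually_forall_ge_atTop.2 h.hasDerivAt,
    eventually_forall_ge_atTop.2 h.deriv_pos] with s hφ hφ' x hx
  refine monotoneOn_of_hasDerivWithinAt_nonneg (convex_Ici s)
    (fun y hy => (hφ y hy).continuousAt.continuousWithinAt) (f' := φ') ?_ ?_ self_mem_Ici hx hx
  · exact fun y hy => (hφ y (interior_subset hy)).hasDerivWithinAt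
  · exact fun y hy => (hφ' y (interior_subset hy)).le

theorem rate_div_sq_anti (h : HasCurvatureRate ε φ φ' κ μ k) :
    ∀ᶠ s in atTop, ∀ x ≥ s, |ε x / φ x ^ 2| ≤ |ε s / φ s ^ 2| := by
  filter_upwards [h.rate_anti, h.eventually_forall_ge_le, h.pos] with s hε hφ hφ_pos x hx
  rw [abs_div, abs_div, abs_of_nonneg (sq_nonneg (φ x)), abs_of_nonneg (sq_nonneg (φ s))]
  have := hε x hx
  have := hφ x hx
  gcongr

theorem tendsto_rate_div_sq (h : HasCurvatureRate ε φ φ' κ μ k) :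
    Tendsto (fun x => ε x / φ x ^ 2) atTop (𝓝 0) := by
  simpa [div_eq_mul_inv] using h.tendsto_rate.mul (h.tendsto_inv.pow 2)

theorem tendstoRate_tailExpansion (h : HasCurvatureRate ε φ φ' κ μ k) :
    TendstoRate (tailExpansion φ κ k) atTop ε 1 := by
  have hε := h.tendsto_rate
  have hsum := ((tendstoRate_const 1).sub (h.curvature.mul h.inv hε)).add
    ((tendstoRate_const (k * (1 + k))).mul (h.inv.mul h.inv hε) hε)
  simp only [mul_zero, sub_zero, add_zero] at hsum
  refine hsum.congr' (Eventually.of_forall fun x => ?_)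
  simp only [tailExpansion]
  ring

theorem tendsto_tailExpansion_div (h : HasCurvatureRate ε φ φ' κ μ k) :
    Tendsto (fun x => tailExpansion φ κ k x / (φ' x * Real.exp (φ x))) atTop (𝓝 0) := by
  have hlog : Tendsto (fun x => φ x * (1 + Real.log (φ' x) / φ x)) atTop atTop :=
    h.tendsto_exponent.atTop_mul_pos one_pos
      (by simpa using (h.log_deriv_div.tendsto h.tendsto_rate).const_add 1)
  have hden : Tendsto (fun x => φ' x * Real.exp (φ x)) atTop atTop := by
    refine (Real.tendsto_exp_atTop.comp hlog).congr' ?_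
    filter_upwards [h.pos, h.deriv_pos] with x hφ hφ'
    rw [Function.comp_apply, mul_add, mul_div_cancel₀ _ hφ.ne', mul_one, add_comm, Real.exp_add,
      Real.exp_log hφ']
  exact (h.tendstoRate_tailExpansion.tendsto h.tendsto_rate).div_atTop hden

theorem tailDefect_isBigO (h : HasCurvatureRate ε φ φ' κ μ k) :
    tailDefect φ κ μ k =O[atTop] fun x => ε x / φ x ^ 2 := by
  have hε := h.tendsto_rate
  have hκ := h.curvature
  have hb := tendstoRate_const (l := atTop) (ε := ε) (k * (1 + k))
  have hsum := (((hb.sub hκ).sub (hκ.mul hκ hε)).add h.curvature_deriv).add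
    ((hb.mul (hκ.add (tendstoRate_const 2)) hε).mul h.inv hε)
  have hzero : k * (1 + k) - k - k * k + 0 + k * (1 + k) * (k + 2) * 0 = 0 := by ring
  rw [hzero] at hsum
  exact ((tendstoRate_zero_iff.1 hsum).mul (isBigO_refl (fun x => (φ x ^ 2)⁻¹) atTop)).congr
    (fun x => (div_eq_mul_inv _ _).symm) fun x => (div_eq_mul_inv _ _).symm

theorem tendstoRate_scaledTail_sub_tailExpansion (h : HasCurvatureRate ε φ φ' κ μ k) :
    TendstoRate (fun x => (scaledTail φ φ' x - tailExpansion φ κ k x) * φ x ^ 2) atTop ε 0 := by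
  have hF := integral_Ioi_sub_isBigO_of_hasDerivAt
    (g := fun x => 1 / Real.exp (φ x))
    (W := fun x => tailExpansion φ κ k x / (φ' x * Real.exp (φ x)))
    (by
      filter_upwards [h.hasDerivAt] with x hφ
      exact continuousAt_const.div hφ.continuousAt.rexp (Real.exp_pos _).ne')
    (Eventually.of_forall fun x => by positivity)
    (by
      filter_upwards [h.pos, h.deriv_pos, h.hasDerivAt, h.hasDerivAt_deriv, h.hasDerivAt_curvature]
        with x hφ hφ' hdφ hdφ' hdκ
      exact hasDerivAt_tailExpansion_div hφ hφ' hdφ hdφ' hdκ)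
    h.tendsto_tailExpansion_div h.tailDefect_isBigO h.tendsto_rate_div_sq
    h.rate_div_sq_anti
  have hmul := (isBigO_refl (fun x => φ' x * Real.exp (φ x) * φ x ^ 2) atTop).mul hF
  have hone := (isBigO_refl ε atTop).mul
    ((h.tendstoRate_tailExpansion.tendsto h.tendsto_rate).isBigO_one ℝ)
  simp only [mul_one] at hone
  refine tendstoRate_zero_iff.2 ((hmul.congr' ?_ ?_).trans hone)
  · filter_upwards [h.deriv_pos] with x hφ'
    simp only [scaledTail, Fint]
    field_simp
  · filter_upwards [h.deriv_pos, h.pos] with x hφ' hφ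
    field_simp

theorem tendstoRate_mul_one_sub_scaledTail (h : HasCurvatureRate ε φ φ' κ μ k) :
    TendstoRate (fun x => φ x * (1 - scaledTail φ φ' x)) atTop ε k := by
  have hε := h.tendsto_rate
  have hsum := (h.curvature.sub ((tendstoRate_const (k * (1 + k))).mul h.inv hε)).sub
    (h.tendstoRate_scaledTail_sub_tailExpansion.mul h.inv hε)
  simp only [mul_zero, sub_zero] at hsum
  refine hsum.congr' ?_
  filter_upwards [h.pos] with x hφ
  simp only [tailExpansion]
  field_simp
  ring

theorem tendstoRate_scaledTail (h : HasCurvatureRate ε φ φ' κ μ k) :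
    TendstoRate (scaledTail φ φ') atTop ε 1 := by
  have hsum := (tendstoRate_const (1 : ℝ)).sub
    (h.tendstoRate_mul_one_sub_scaledTail.mul h.inv h.tendsto_rate)
  simp only [mul_zero, sub_zero] at hsum
  refine hsum.congr' ?_
  filter_upwards [h.pos] with x hφ
  field_simp
  ring

theorem tendstoRate_scaledTail_mul_one_add_sub_one (h : HasCurvatureRate ε φ φ' κ μ k) :
    TendstoRate (fun x => (scaledTail φ φ' x * (1 + κ x / φ x) - 1) * φ x ^ 2) atTop ε k := by
  have hε := h.tendsto_rate
  have hκ := h.curvature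
  have hb := tendstoRate_const (l := atTop) (ε := ε) (k * (1 + k))
  have hsum := (h.tendstoRate_scaledTail_sub_tailExpansion.mul
    ((tendstoRate_const 1).add (hκ.mul h.inv hε)) hε).add
    ((hb.sub (hκ.mul hκ hε)).add ((hb.mul hκ hε).mul h.inv hε))
  have hk : 0 * (1 + k * 0) + (k * (1 + k) - k * k + k * (1 + k) * k * 0) = k := by ring
  rw [hk] at hsum
  refine hsum.congr' ?_
  filter_upwards [h.pos] with x hφ
  simp only [tailExpansion]
  field_simp
  ring

theorem tendstoRate_neg_log_tail_div (h : HasCurvatureRate ε φ φ' κ μ k) :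
    TendstoRate (fun x => -Real.log (Fint (fun y => Real.exp (φ y)) x) / φ x) atTop ε 1 := by
  have hε := h.tendsto_rate
  have hu := h.tendstoRate_scaledTail
  have hlog_u := (Real.differentiableAt_log one_ne_zero).tendstoRate_comp hu hε
  have hsum := ((tendstoRate_const 1).add h.log_deriv_div).sub (hlog_u.mul h.inv hε)
  simp only [mul_zero, sub_zero, add_zero] at hsum
  refine hsum.congr' ?_
  filter_upwards [h.pos, h.deriv_pos, (hu.tendsto hε).eventually_const_lt one_pos]
    with x hφ hφ' hu
  have hF : Fint (fun y => Real.exp (φ y)) x ≠ 0 := right_ne_zero_of_mul hu.ne'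
  simp only [scaledTail]
  rw [Real.log_mul (by positivity) hF, Real.log_mul hφ'.ne' (Real.exp_ne_zero _), Real.log_exp]
  field_simp
  ring

theorem eventually_deriv_exp_eq (h : HasCurvatureRate ε φ φ' κ μ k) :
    ∀ᶠ x in atTop, deriv (fun y => Real.exp (φ y)) x = φ' x * Real.exp (φ x) := by
  filter_upwards [h.hasDerivAt] with x hφ
  rw [hφ.exp.deriv, mul_comm]

theorem eventually_deriv_deriv_exp_eq (h : HasCurvatureRate ε φ φ' κ μ k) :
    ∀ᶠ x in atTop, deriv (deriv fun y => Real.exp (φ y)) x =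
      φ' x ^ 2 * (1 + κ x / φ x) * Real.exp (φ x) := by
  obtain ⟨a, ha⟩ := eventually_atTop.1 h.eventually_deriv_exp_eq
  filter_upwards [eventually_gt_atTop a, h.hasDerivAt, h.hasDerivAt_deriv] with x hx hφ hφ'
  have hderiv : deriv (fun y => Real.exp (φ y)) =ᶠ[𝓝 x] fun y => φ' y * Real.exp (φ y) :=
    eventually_of_mem (Ioi_mem_nhds hx) fun y hy => ha y (le_of_lt hy)
  exact hderiv.deriv_eq.trans ((hφ'.mul hφ.exp).deriv.trans (by ring))

theorem tendstoRate_invB1 (h : HasCurvatureRate ε φ φ' κ μ k) :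
    TendstoRate (invB1 (fun y => Real.exp (φ y)) (Fint fun y => Real.exp (φ y))) atTop ε k := by
  have hprod :=
    h.tendstoRate_neg_log_tail_div.mul h.tendstoRate_mul_one_sub_scaledTail h.tendsto_rate
  rw [one_mul] at hprod
  refine hprod.congr' ?_
  filter_upwards [h.pos, h.eventually_deriv_exp_eq] with x hφ hf'
  simp only [invB1, hf', scaledTail]
  field_simp

theorem tendstoRate_invB2 (h : HasCurvatureRate ε φ φ' κ μ k) :
    TendstoRate (invB2 (fun y => Real.exp (φ y)) (Fint fun y => Real.exp (φ y))) atTop ε k := by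
  have hε := h.tendsto_rate
  have hlog_sq := h.tendstoRate_neg_log_tail_div.mul h.tendstoRate_neg_log_tail_div hε
  have hprod := (h.tendstoRate_scaledTail.mul hlog_sq hε).mul
    h.tendstoRate_scaledTail_mul_one_add_sub_one hε
  simp only [one_mul] at hprod
  refine hprod.congr' ?_
  filter_upwards [h.pos, h.deriv_pos, h.eventually_deriv_exp_eq, h.eventually_deriv_deriv_exp_eq]
    with x hφ hφ' hf' hf''
  simp only [invB2, hf', hf'', scaledTail]
  field_simp

end HasCurvatureRate

section LogPower

/-- The exponent `s^q (log s)^r` of the nonlinearity. -/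
noncomputable def logPowExponent (q r x : ℝ) : ℝ := x ^ q * Real.log x ^ r

/-- The derivative of `logPowExponent q r`. -/
noncomputable def logPowExponentDeriv (q r x : ℝ) : ℝ :=
  logPowExponent q r x * (q + r * (Real.log x)⁻¹) / x

/-- The curvature `φ φ'' / φ'²` of `φ = logPowExponent q r` as a function of `y = 1 / log x`. -/
noncomputable def logPowCurvature (q r y : ℝ) : ℝ :=
  1 - 1 / (q + r * y) - r * y ^ 2 / (q + r * y) ^ 2

/-- The logarithmic derivative `φ κ' / φ'` of `κ x = logPowCurvature q r (1 / log x)` with respect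
to `φ = logPowExponent q r`, as a function of `y = 1 / log x`. -/
noncomputable def logPowCurvatureDeriv (q r y : ℝ) : ℝ :=
  -(y ^ 2 * deriv (logPowCurvature q r) y) / (q + r * y)

variable {q r x : ℝ}

theorem logPowExponent_pos (q r : ℝ) (hx : 1 < x) : 0 < logPowExponent q r x :=
  mul_pos (Real.rpow_pos_of_pos (one_pos.trans hx) q) (Real.rpow_pos_of_pos (Real.log_pos hx) r)

theorem logPowExponentDeriv_pos (hx : 1 < x) (hp : 0 < q + r * (Real.log x)⁻¹) :
    0 < logPowExponentDeriv q r x :=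
  div_pos (mul_pos (logPowExponent_pos q r hx) hp) (one_pos.trans hx)

theorem hasDerivAt_inv_log (hx : 1 < x) :
    HasDerivAt (fun y => (Real.log y)⁻¹) (-(Real.log x)⁻¹ ^ 2 / x) x := by
  have hx0 : 0 < x := one_pos.trans hx
  have hlog := Real.log_pos hx
  refine ((Real.hasDerivAt_log hx0.ne').inv hlog.ne').congr_deriv ?_
  field_simp

theorem hasDerivAt_logPowExponent (q r : ℝ) (hx : 1 < x) :
    HasDerivAt (logPowExponent q r) (logPowExponentDeriv q r x) x := by
  have hx0 : 0 < x := one_pos.trans hx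
  have hlog := Real.log_pos hx
  refine ((Real.hasDerivAt_rpow_const (p := q) (Or.inl hx0.ne')).mul
    ((Real.hasDerivAt_log hx0.ne').rpow_const (p := r) (Or.inl hlog.ne'))).congr_deriv ?_
  rw [logPowExponentDeriv, logPowExponent, Real.rpow_sub_one hx0.ne', Real.rpow_sub_one hlog.ne']
  field_simp

theorem hasDerivAt_logPowExponentDeriv (hx : 1 < x) (hp : q + r * (Real.log x)⁻¹ ≠ 0) :
    HasDerivAt (logPowExponentDeriv q r) (logPowCurvature q r (Real.log x)⁻¹ *
      logPowExponentDeriv q r x ^ 2 / logPowExponent q r x) x := by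
  have hx0 : 0 < x := one_pos.trans hx
  have hφ := logPowExponent_pos q r hx
  have hp_deriv := ((hasDerivAt_inv_log hx).const_mul r).const_add q
  refine (((hasDerivAt_logPowExponent q r hx).mul hp_deriv).div
    (hasDerivAt_id x) hx0.ne').congr_deriv ?_
  simp only [logPowExponentDeriv, logPowCurvature, Pi.mul_apply, id_eq]
  generalize (Real.log x)⁻¹ = y at hp ⊢
  field_simp
  ring

theorem analyticAt_logPowCurvature {y : ℝ} (hy : q + r * y ≠ 0) :
    AnalyticAt ℝ (logPowCurvature q r) y := by
  unfold logPowCurvature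
  fun_prop (disch := positivity)

theorem hasDerivAt_logPowCurvature_inv_log (hx : 1 < x) (hp : q + r * (Real.log x)⁻¹ ≠ 0) :
    HasDerivAt (fun y => logPowCurvature q r (Real.log y)⁻¹)
      (logPowCurvatureDeriv q r (Real.log x)⁻¹ *
        logPowExponentDeriv q r x / logPowExponent q r x) x := by
  have hφ := logPowExponent_pos q r hx
  refine ((analyticAt_logPowCurvature hp).differentiableAt.hasDerivAt.comp x
    (hasDerivAt_inv_log hx)).congr_deriv ?_
  rw [logPowExponentDeriv, logPowCurvatureDeriv]
  generalize q + r * (Real.log x)⁻¹ = p at hp ⊢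
  field_simp

theorem tendsto_inv_log : Tendsto (fun x : ℝ => (Real.log x)⁻¹) atTop (𝓝 0) :=
  tendsto_inv_atTop_zero.comp Real.tendsto_log_atTop

theorem tendsto_add_mul_inv_log (q r : ℝ) :
    Tendsto (fun x => q + r * (Real.log x)⁻¹) atTop (𝓝 q) := by
  simpa using (tendsto_inv_log.const_mul r).const_add q

theorem eventually_abs_inv_log_anti :
    ∀ᶠ s in atTop, ∀ x ≥ s, |(Real.log x)⁻¹| ≤ |(Real.log s)⁻¹| := by
  filter_upwards [eventually_gt_atTop 1] with s hs x hx
  have hlog := Real.log_pos hs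
  have hle : Real.log s ≤ Real.log x := Real.log_le_log (one_pos.trans hs) hx
  rw [abs_inv, abs_inv, abs_of_pos hlog, abs_of_pos (hlog.trans_le hle)]
  gcongr

theorem isBigO_log_of_tendsto {g : ℝ → ℝ} {c : ℝ} (hg : Tendsto g atTop (𝓝 c)) :
    g =O[atTop] Real.log :=
  (hg.isBigO_one ℝ).trans Real.isLittleO_const_log_atTop.isBigO

theorem log_sq_isBigO_logPowExponent (hq : 0 < q) (r : ℝ) :
    (fun x => Real.log x ^ 2) =O[atTop] logPowExponent q r := by
  have h := ((isLittleO_log_rpow_rpow_atTop (2 - r) hq).isBigO.mul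
    (isBigO_refl (fun x => Real.log x ^ r) atTop))
  refine h.congr' ?_ EventuallyEq.rfl
  filter_upwards [eventually_gt_atTop 1] with x hx
  rw [← Real.rpow_add (Real.log_pos hx), sub_add_cancel, Real.rpow_two]

theorem isBigO_log_div_logPowExponent {g : ℝ → ℝ} (hq : 0 < q) (r : ℝ)
    (hg : g =O[atTop] Real.log) :
    (fun x => g x / logPowExponent q r x) =O[atTop] fun x => (Real.log x)⁻¹ := by
  have hinv := (log_sq_isBigO_logPowExponent hq r).inv_rev (by
    filter_upwards [eventually_gt_atTop 1] with x hx h0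
    exact absurd h0 (pow_ne_zero 2 (Real.log_pos hx).ne'))
  refine (hg.mul hinv).congr' (Eventually.of_forall fun x => (div_eq_mul_inv _ _).symm) ?_
  filter_upwards [eventually_gt_atTop 1] with x hx
  have := Real.log_pos hx
  field_simp

theorem log_logPowExponentDeriv_isBigO_log (hq : 0 < q) (r : ℝ) :
    (fun x => Real.log (logPowExponentDeriv q r x)) =O[atTop] Real.log := by
  have hp := tendsto_add_mul_inv_log q r
  have hloglog : (fun x => Real.log (Real.log x)) =O[atTop] Real.log :=
    (Real.isLittleO_log_id_atTop.comp_tendsto Real.tendsto_log_atTop).isBigO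
  have hlogp : (fun x => Real.log (q + r * (Real.log x)⁻¹)) =O[atTop] Real.log :=
    isBigO_log_of_tendsto (hp.log hq.ne')
  refine ((((isBigO_refl Real.log atTop).const_mul_left (q - 1)).add
    (hloglog.const_mul_left r)).add hlogp).congr' ?_ EventuallyEq.rfl
  filter_upwards [eventually_gt_atTop 1, hp.eventually_const_lt hq] with x hx hp
  have hx0 : 0 < x := one_pos.trans hx
  have hlog := Real.log_pos hx
  rw [logPowExponentDeriv, Real.log_div (mul_pos (logPowExponent_pos q r hx) hp).ne' hx0.ne',
    Real.log_mul (logPowExponent_pos q r hx).ne' hp.ne', logPowExponent,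
    Real.log_mul (by positivity) (by positivity), Real.log_rpow hx0, Real.log_rpow hlog]
  ring

theorem tendstoRate_inv_log :
    TendstoRate (fun x => (Real.log x)⁻¹) atTop (fun x => (Real.log x)⁻¹) 0 :=
  tendstoRate_zero_iff.2 (isBigO_refl _ _)

theorem tendstoRate_logPowCurvature (hq : q ≠ 0) (r : ℝ) :
    TendstoRate (fun x => logPowCurvature q r (Real.log x)⁻¹) atTop (fun x => (Real.log x)⁻¹)
      (1 - 1 / q) := by
  have hK : AnalyticAt ℝ (logPowCurvature q r) 0 := analyticAt_logPowCurvature (by simpa using hq)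
  simpa [logPowCurvature] using
    hK.differentiableAt.tendstoRate_comp tendstoRate_inv_log tendsto_inv_log

theorem tendstoRate_logPowCurvatureDeriv (hq : q ≠ 0) (r : ℝ) :
    TendstoRate (fun x => logPowCurvatureDeriv q r (Real.log x)⁻¹) atTop
      (fun x => (Real.log x)⁻¹) 0 := by
  have hK : AnalyticAt ℝ (logPowCurvature q r) 0 := analyticAt_logPowCurvature (by simpa using hq)
  have hD : DifferentiableAt ℝ (logPowCurvatureDeriv q r) 0 := by
    have hK' := hK.deriv.differentiableAt
    have hp : q + r * 0 ≠ 0 := by simpa using hq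
    unfold logPowCurvatureDeriv
    fun_prop (disch := assumption)
  simpa [logPowCurvatureDeriv] using hD.tendstoRate_comp tendstoRate_inv_log tendsto_inv_log

theorem hasCurvatureRate_logPowExponent (hq : 0 < q) (r : ℝ) :
    HasCurvatureRate (fun x => (Real.log x)⁻¹) (logPowExponent q r) (logPowExponentDeriv q r)
      (fun x => logPowCurvature q r (Real.log x)⁻¹)
      (fun x => logPowCurvatureDeriv q r (Real.log x)⁻¹) (1 - 1 / q) := by
  have hgt := eventually_gt_atTop (1 : ℝ)
  have hp := hgt.and ((tendsto_add_mul_inv_log q r).eventually_const_lt hq)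
  exact
    { tendsto_rate := tendsto_inv_log
      rate_anti := eventually_abs_inv_log_anti
      pos := hgt.mono fun x hx => logPowExponent_pos q r hx
      deriv_pos := hp.mono fun x hx => logPowExponentDeriv_pos hx.1 hx.2
      hasDerivAt := hgt.mono fun x hx => hasDerivAt_logPowExponent q r hx
      hasDerivAt_deriv := hp.mono fun x hx => hasDerivAt_logPowExponentDeriv hx.1 hx.2.ne'
      hasDerivAt_curvature := hp.mono fun x hx =>
        hasDerivAt_logPowCurvature_inv_log hx.1 hx.2.ne'
      curvature := tendstoRate_logPowCurvature hq.ne' r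
      curvature_deriv := tendstoRate_logPowCurvatureDeriv hq.ne' r
      inv := by
        simpa only [one_div] using tendstoRate_zero_iff.2
          (isBigO_log_div_logPowExponent hq r (isBigO_log_of_tendsto (tendsto_const_nhds (x := 1))))
      log_deriv_div := tendstoRate_zero_iff.2
        (isBigO_log_div_logPowExponent hq r (log_logPowExponentDeriv_isBigO_log hq r)) }

end LogPower

theorem stmt17_general (q r : ℝ) (hq : 0 < q) :
    (∃ C > (0 : ℝ), ∃ s₁ > Real.exp 1, ∀ s ≥ s₁,
      |invB1 (fun x => Real.exp (x ^ q * (Real.log x) ^ r))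
          (Fint (fun x => Real.exp (x ^ q * (Real.log x) ^ r))) s - (1 - 1 / q)|
        ≤ C / Real.log s
      ∧ |invB2 (fun x => Real.exp (x ^ q * (Real.log x) ^ r))
          (Fint (fun x => Real.exp (x ^ q * (Real.log x) ^ r))) s - (1 - 1 / q)|
        ≤ C / Real.log s)
    ∧ Tendsto (fun s => invB2 (fun x => Real.exp (x ^ q * (Real.log x) ^ r))
        (Fint (fun x => Real.exp (x ^ q * (Real.log x) ^ r))) s) atTop
        (nhds (1 - 1 / q)) := by
  have hφ := hasCurvatureRate_logPowExponent hq r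
  refine ⟨?_, hφ.tendstoRate_invB2.tendsto tendsto_inv_log⟩
  obtain ⟨C, hC, hbound⟩ := (hφ.tendstoRate_invB1.prod_left hφ.tendstoRate_invB2).exists_pos
  obtain ⟨s₁, hs₁⟩ := eventually_atTop.1 (hbound.bound.and (eventually_gt_atTop (Real.exp 1)))
  refine ⟨C, hC, s₁, (hs₁ s₁ le_rfl).2, fun s hs => ?_⟩
  obtain ⟨hle, hs_gt⟩ := hs₁ s hs
  have hlog : 0 < Real.log s := Real.log_pos ((Real.one_lt_exp_iff.2 one_pos).trans hs_gt)
  rw [norm_inv, Real.norm_of_nonneg hlog.le, ← div_eq_mul_inv] at hle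
  exact ⟨(norm_fst_le _).trans hle, (norm_snd_le _).trans hle⟩

/-- Estimates (3.5e), (3.5f): for `f(s) = e^{s^q (log s)^r}` with `q > 1`,
`1/B₁[f](s) = 1 − 1/q + O(1/log s)` and `1/B₂[f](s) = 1 − 1/q + O(1/log s)`;
in particular `B = q/(q−1)`. -/
theorem stmt17 (q r : ℝ) (hq : 1 < q) :
    (∃ C > (0 : ℝ), ∃ s₁ > Real.exp 1, ∀ s ≥ s₁,
      |invB1 (fun x => Real.exp (x ^ q * (Real.log x) ^ r))
          (Fint (fun x => Real.exp (x ^ q * (Real.log x) ^ r))) s - (1 - 1 / q)|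
        ≤ C / Real.log s
      ∧ |invB2 (fun x => Real.exp (x ^ q * (Real.log x) ^ r))
          (Fint (fun x => Real.exp (x ^ q * (Real.log x) ^ r))) s - (1 - 1 / q)|
        ≤ C / Real.log s)
    ∧ Tendsto (fun s => invB2 (fun x => Real.exp (x ^ q * (Real.log x) ^ r))
        (Fint (fun x => Real.exp (x ^ q * (Real.log x) ^ r))) s) atTop
        (nhds (1 - 1 / q)) :=
  stmt17_general q r (one_pos.trans hq)
end
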